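/- If X is a 1-dimensional hereditarily indecomposable Hausdorff continuum, then either the hyperspace C(X) has covering dimension 2, or C(X) is not a C-space. -/

import Mathlib

open Set TopologicalSpace FirstOrder

universe u v

/-- `U` is a cover of `X` by open sets. -/
def IsOpenCover {X : Type u} [TopologicalSpace X] (U : Set (Set X)) : Prop :=
  (∀ s ∈ U, IsOpen s) ∧ ⋃₀ U = Set.univ

/-- `V` refines `U`: every member of `V` is contained in some member of `U`. -/
def Refines {X : Type u} (V U : Set (Set X)) : Prop :=
  ∀ v ∈ V, ∃ u ∈ U, v ⊆ u

/-- `X` is a C-space (has property C): every sequence of open covers admits a sequence of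
families of pairwise disjoint open sets, the `i`-th refining the `i`-th cover, whose union
covers `X`. -/
def IsCSpace (X : Type u) [TopologicalSpace X] : Prop :=
  ∀ U : ℕ → Set (Set X), (∀ i, IsOpenCover (U i)) →
    ∃ V : ℕ → Set (Set X),
      (∀ i, (∀ s ∈ V i, IsOpen s) ∧ (V i).PairwiseDisjoint id ∧ Refines (V i) (U i)) ∧
      (⋃ i, ⋃₀ (V i)) = Set.univ

/-- `X` is an `m`-C-space: property C restricted to `m`-element open covers. -/
def IsMCSpace (m : ℕ) (X : Type u) [TopologicalSpace X] : Prop :=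
  ∀ U : ℕ → Fin m → Set X, (∀ i j, IsOpen (U i j)) → (∀ i, (⋃ j, U i j) = Set.univ) →
    ∃ V : ℕ → Set (Set X),
      (∀ i, (∀ s ∈ V i, IsOpen s) ∧ (V i).PairwiseDisjoint id ∧ ∀ v ∈ V i, ∃ j, v ⊆ U i j) ∧
      (⋃ i, ⋃₀ (V i)) = Set.univ

/-- Covering dimension at most `n`: every finite open cover has a finite open refinement
of order at most `n + 1`. -/
def CovDimLE (X : Type u) [TopologicalSpace X] (n : ℕ) : Prop :=
  ∀ U : Set (Set X), U.Finite → IsOpenCover U →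
    ∃ V : Set (Set X), V.Finite ∧ IsOpenCover V ∧ Refines V U ∧
      ∀ x : X, {v ∈ V | x ∈ v}.ncard ≤ n + 1

/-- The covering dimension, as an extended natural number (`⊤` if infinite dimensional). -/
noncomputable def covDim (X : Type u) [TopologicalSpace X] : ℕ∞ :=
  sInf ((fun n : ℕ => (n : ℕ∞)) '' {n : ℕ | CovDimLE X n})

/-- The hyperspace `C(X)` of subcontinua (nonempty closed connected subsets) of `X`. -/
def Subcontinua (X : Type u) [TopologicalSpace X] : Type u :=
  {A : Set X // IsClosed A ∧ IsConnected A}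

/-- The Vietoris topology on the hyperspace of subcontinua. -/
instance Subcontinua.instTopologicalSpace (X : Type u) [TopologicalSpace X] :
    TopologicalSpace (Subcontinua X) :=
  TopologicalSpace.generateFrom
    ({s | ∃ U : Set X, IsOpen U ∧ s = {A : Subcontinua X | A.1 ⊆ U}} ∪
     {s | ∃ U : Set X, IsOpen U ∧ s = {A : Subcontinua X | (A.1 ∩ U).Nonempty}})

/-- `X` is hereditarily indecomposable: any two subcontinua are comparable or disjoint. -/
def HereditarilyIndecomposable (X : Type u) [TopologicalSpace X] : Prop :=
  ∀ A B : Set X, IsClosed A → IsConnected A → IsClosed B → IsConnected B →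
    A ⊆ B ∨ B ⊆ A ∨ A ∩ B = ∅

/-!
Finite families of functions on `X` give pseudometrics on `C(X)` through their maxima on
subcontinua, and the sums of these maxima are monotone functions that serve as Whitney maps.

Suppose `C(X)` has property C. Then a small perturbation `l` of such a sum, and a cover of `C(X)`
whose members are marked by small open subsets of `X`, split each slab between two nearby levels of
`l` into two closed sets whose components are small. The trace of the first set on a single level
has components of arbitrarily small size, because such a component meets at most one mark from each
stage, and the sizes allowed at the stages form a convergent series. Staggering two such systems of
slabs yields covers of order three, so the dimension is at most two.

For the lower bound choose `p ≠ q` in `X` and cover `C(X)` by the continua missing `q`, those that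
are not points, and those missing `p`. Growing points to `X` turns a refinement of order two into a
map from the cylinder over `X` to the boundary of a triangle; its logarithm would have an imaginary
part increasing around a closed loop.
-/

section Topology

/-- In a compact Hausdorff space components coincide with quasicomponents, so a component inside an
open set is separated from its complement by a clopen set. -/
theorem exists_isClopen_of_connectedComponent_subset {Y : Type*} [TopologicalSpace Y]
    [CompactSpace Y] [T2Space Y] {y : Y} {G : Set Y} (hG : IsOpen G)
    (hyG : connectedComponent y ⊆ G) : ∃ Z, IsClopen Z ∧ y ∈ Z ∧ Z ⊆ G := by
  rw [connectedComponent_eq_iInter_isClopen] at hyG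
  have : Nonempty {Z : Set Y // IsClopen Z ∧ y ∈ Z} := ⟨⟨univ, isClopen_univ, trivial⟩⟩
  obtain ⟨Z, hZG⟩ := exists_subset_nhds_of_compactSpace
    (V := fun Z : {Z : Set Y // IsClopen Z ∧ y ∈ Z} ↦ Z.1)
    (fun Z W ↦ ⟨⟨Z.1 ∩ W.1, Z.2.1.inter W.2.1, Z.2.2, W.2.2⟩, inter_subset_left,
      inter_subset_right⟩)
    (fun Z ↦ Z.2.1.1) fun z hz ↦ hG.mem_nhds (hyG hz)
  exact ⟨Z.1, Z.2.1, Z.2.2, hZG⟩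

theorem isClosed_connectedComponentIn {Y : Type*} [TopologicalSpace Y] {F : Set Y}
    (hF : IsClosed F) (y : Y) : IsClosed (connectedComponentIn F y) := by
  by_cases hy : y ∈ F
  · rw [connectedComponentIn_eq_image hy]
    exact hF.isClosedEmbedding_subtypeVal.isClosedMap _ isClosed_connectedComponent
  · rw [connectedComponentIn_eq_empty hy]
    exact isClosed_empty

/-- Boundary bumping: a clopen subset of `closure G` inside `G` would be clopen in `Y`. -/
theorem not_connectedComponentIn_closure_subset {Y : Type*} [TopologicalSpace Y]
    [CompactSpace Y] [T2Space Y] [PreconnectedSpace Y] {y : Y} {G : Set Y} (hG : IsOpen G)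
    (hy : y ∈ G) (hne : G ≠ univ) : ¬ connectedComponentIn (closure G) y ⊆ G := by
  intro hsub
  have hy' : y ∈ closure G := subset_closure hy
  rw [connectedComponentIn_eq_image hy', image_subset_iff] at hsub
  have : CompactSpace (closure G) := isCompact_iff_compactSpace.1 isClosed_closure.isCompact
  obtain ⟨Z, hZ, hyZ, hZG⟩ := exists_isClopen_of_connectedComponent_subset
    (hG.preimage continuous_subtype_val) hsub
  have himage : IsClopen ((↑) '' Z : Set Y) := by
    refine ⟨isClosed_closure.isClosedEmbedding_subtypeVal.isClosedMap _ hZ.1, ?_⟩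
    obtain ⟨O, hO, rfl⟩ := isOpen_induced_iff.1 hZ.2
    convert hO.inter hG using 1
    ext z
    simp only [mem_image, mem_preimage, Subtype.exists, exists_and_left, exists_prop,
      exists_eq_right_right, mem_inter_iff, and_congr_right_iff]
    exact fun hzO ↦ ⟨fun hz ↦ @hZG ⟨z, hz⟩ hzO, fun hz ↦ subset_closure hz⟩
  refine hne (eq_univ_of_univ_subset ?_)
  rw [← himage.eq_univ ⟨y, ⟨y, hy'⟩, hyZ, rfl⟩]
  exact image_subset_iff.2 hZG

theorem exists_isGreatest_of_isCompact_of_directedOn {α : Type*} [TopologicalSpace α] [Preorder α]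
    [ClosedIciTopology α] {s : Set α} (hs : IsCompact s) (hne : s.Nonempty)
    (hdir : DirectedOn (· ≤ ·) s) : ∃ m, IsGreatest s m := by
  have : Nonempty s := hne.to_subtype
  have : IsDirectedOrder s := directedOn_iff_isDirectedOrder.1 hdir
  obtain ⟨m, hms, hm⟩ := hs.inter_iInter_nonempty (fun b : s ↦ Ici (b : α)) (fun b ↦ isClosed_Ici)
    fun F ↦ by
      obtain ⟨M, hM⟩ := F.exists_le
      exact ⟨M, M.2, mem_iInter₂.2 fun b hb ↦ hM b hb⟩
  exact ⟨m, hms, fun b hb ↦ mem_iInter.1 hm ⟨b, hb⟩⟩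

theorem exists_isLeast_of_isCompact_of_directedOn {α : Type*} [TopologicalSpace α] [Preorder α]
    [ClosedIicTopology α] {s : Set α} (hs : IsCompact s) (hne : s.Nonempty)
    (hdir : DirectedOn (· ≥ ·) s) : ∃ m, IsLeast s m :=
  exists_isGreatest_of_isCompact_of_directedOn (α := αᵒᵈ) hs hne hdir

theorem isClosed_lowerClosure {α : Type*} [TopologicalSpace α] [CompactSpace α] [Preorder α]
    [OrderClosedTopology α] {s : Set α} (hs : IsClosed s) : IsClosed (lowerClosure s : Set α) := by
  convert isClosedMap_fst_of_compactSpace _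
    (OrderClosedTopology.isClosed_le'.inter (hs.preimage continuous_snd)) using 1
  ext a
  simp only [SetLike.mem_coe, mem_lowerClosure, mem_image, mem_inter_iff, mem_ofPred_eq,
    mem_preimage, Prod.exists, exists_and_right, exists_eq_right]
  exact exists_congr fun b ↦ and_comm

theorem isClosed_setOf_isPreconnected {Y : Type*} [TopologicalSpace Y] [T2Space Y] :
    IsClosed {K : NonemptyCompacts Y | IsPreconnected (K : Set Y)} := by
  rw [← isOpen_compl_iff, isOpen_iff_forall_mem_open]
  intro K hK
  rw [mem_compl_iff, mem_ofPred_eq, isPreconnected_closed_iff] at hK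
  push Not at hK
  obtain ⟨E, F, hE, hF, hKEF, hKE, hKF, hdisj⟩ := hK
  obtain ⟨U, V, hU, hV, hEU, hFV, hUV⟩ := SeparatedNhds.of_isCompact_isCompact
    (K.isCompact.inter_right hE) (K.isCompact.inter_right hF)
    (by rwa [disjoint_iff_inter_eq_empty, ← inter_inter_distrib_left])
  refine ⟨_, ?_, ((NonemptyCompacts.isOpen_subsets_of_isOpen (hU.union hV)).inter
    (NonemptyCompacts.isOpen_inter_nonempty_of_isOpen hU)).inter
    (NonemptyCompacts.isOpen_inter_nonempty_of_isOpen hV),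
    ⟨fun x hx ↦ (hKEF hx).imp (fun h ↦ hEU ⟨hx, h⟩) fun h ↦ hFV ⟨hx, h⟩,
      hKE.mono fun x hx ↦ ⟨hx.1, hEU hx⟩⟩, hKF.mono fun x hx ↦ ⟨hx.1, hFV hx⟩⟩
  rintro L ⟨⟨hLUV, hLU⟩, hLV⟩ hL
  obtain ⟨x, -, hxU, hxV⟩ := hL U V hU hV hLUV hLU hLV
  exact hUV.notMem_of_mem_left hxU hxV

theorem continuous_of_isClosed_rel {α β γ : Type*} [TopologicalSpace α] [TopologicalSpace β]
    [CompactSpace β] [TopologicalSpace γ] {R : Set (α × β)} (hR : IsClosed R) {g : β → γ}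
    (hg : Continuous g) {f : α → γ} (hex : ∀ a, ∃ b, (a, b) ∈ R)
    (heq : ∀ a b, (a, b) ∈ R → g b = f a) : Continuous f := by
  refine continuous_iff_isClosed.2 fun F hF ↦ ?_
  convert isClosedMap_fst_of_compactSpace _ (hR.inter (hF.preimage (hg.comp continuous_snd)))
    using 1
  ext a
  constructor
  · intro ha
    obtain ⟨b, hb⟩ := hex a
    exact ⟨(a, b), ⟨hb, show g b ∈ F from (heq a b hb).symm ▸ ha⟩, rfl⟩
  · rintro ⟨⟨a, b⟩, ⟨hb, hbF⟩, rfl⟩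
    exact show f a ∈ F from heq a b hb ▸ hbF

theorem exists_pos_forall_abs_mul_le {α : Type*} [TopologicalSpace α] [CompactSpace α] {f : α → ℝ}
    (hf : Continuous f) {r : ℝ} (hr : 0 < r) : ∃ c > 0, ∀ a, |c * f a| ≤ r := by
  obtain ⟨C, hC⟩ := isCompact_univ.exists_bound_of_continuousOn hf.continuousOn
  have hpos : 0 < max C 1 := one_pos.trans_le (le_max_right C 1)
  refine ⟨r / max C 1, div_pos hr hpos, fun a ↦ ?_⟩
  rw [abs_mul, abs_of_pos (div_pos hr hpos), div_mul_eq_mul_div, div_le_iff₀ hpos]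
  exact mul_le_mul_of_nonneg_left ((hC a trivial).trans (le_max_left C 1)) hr.le

theorem isOpenCover_setOf_closure_prod_subset {Y : Type*} [TopologicalSpace Y] [RegularSpace Y]
    {V : Set (Y × Y)} (hV : IsOpen V) (hdiag : ∀ y, (y, y) ∈ V) :
    _root_.IsOpenCover {w : Set Y | IsOpen w ∧ closure w ×ˢ closure w ⊆ V} := by
  refine ⟨fun w hw ↦ hw.1, eq_univ_of_forall fun y ↦ ?_⟩
  obtain ⟨U, hU, hyU, hUV⟩ := exists_nhds_square (hV.mem_nhds (hdiag y))
  obtain ⟨K, hK, hKc, hKU⟩ := exists_mem_nhds_isClosed_subset (hU.mem_nhds hyU)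
  have hcl : closure (interior K) ⊆ U := (closure_minimal interior_subset hKc).trans hKU
  exact ⟨interior K, ⟨isOpen_interior, (prod_mono hcl hcl).trans hUV⟩,
    mem_interior_iff_mem_nhds.2 hK⟩

theorem abs_sub_le_of_hasSum_of_forall_fiber {α ι : Type*} [TopologicalSpace α]
    [PreconnectedSpace α] [Countable ι] {f : α → ℝ} (hf : Continuous f) {m : α → ι} {d : ι → ℝ}
    {D : ℝ} (hd : ∀ j, 0 ≤ d j) (hD : HasSum d D)
    (hosc : ∀ x y, m x = m y → |f x - f y| ≤ d (m x)) (x y : α) : |f x - f y| ≤ D := by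
  wlog hxy : f x ≤ f y generalizing x y
  · rw [abs_sub_comm]
    exact this y x (le_of_not_ge hxy)
  rw [abs_sub_comm, abs_of_nonneg (sub_nonneg.2 hxy)]
  have hcover : Icc (f x) (f y) ⊆ ⋃ j, f '' (m ⁻¹' {j}) := by
    rw [← image_iUnion, ← preimage_iUnion, iUnion_of_singleton, preimage_univ]
    exact (isPreconnected_univ.image f hf.continuousOn).ordConnected.out ⟨x, trivial, rfl⟩
      ⟨y, trivial, rfl⟩
  have hfiber : ∀ j, MeasureTheory.volume (f '' (m ⁻¹' {j})) ≤ ENNReal.ofReal (d j) := fun j ↦ by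
    refine (Real.volume_le_diam _).trans (Metric.ediam_le ?_)
    rintro _ ⟨a, rfl, rfl⟩ _ ⟨b, hb, rfl⟩
    rw [edist_dist]
    exact ENNReal.ofReal_le_ofReal (hosc a b hb.symm)
  have hvol : ENNReal.ofReal (f y - f x) ≤ ENNReal.ofReal D := calc
    _ = MeasureTheory.volume (Icc (f x) (f y)) := Real.volume_Icc.symm
    _ ≤ ∑' j, MeasureTheory.volume (f '' (m ⁻¹' {j})) :=
      (MeasureTheory.measure_mono hcover).trans (MeasureTheory.measure_iUnion_le _)
    _ ≤ ∑' j, ENNReal.ofReal (d j) := ENNReal.tsum_le_tsum hfiber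
    _ = ENNReal.ofReal D := by rw [← ENNReal.ofReal_tsum_of_nonneg hd hD.summable, hD.tsum_eq]
  exact (ENNReal.ofReal_le_ofReal_iff (hD.nonneg hd)).1 hvol

end Topology

namespace Subcontinua

variable {X : Type u} [TopologicalSpace X]

instance : SetLike (Subcontinua X) X where
  coe A := A.1
  coe_injective := Subtype.val_injective

instance : PartialOrder (Subcontinua X) := .ofSetLike (Subcontinua X) X

instance [ConnectedSpace X] : OrderTop (Subcontinua X) where
  top := ⟨univ, isClosed_univ, isConnected_univ⟩
  le_top A := subset_univ (A : Set X)

theorem isClosed (A : Subcontinua X) : IsClosed (A : Set X) := A.2.1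

theorem isConnected (A : Subcontinua X) : IsConnected (A : Set X) := A.2.2

theorem nonempty (A : Subcontinua X) : (A : Set X).Nonempty := A.isConnected.nonempty

theorem isCompact [CompactSpace X] (A : Subcontinua X) : IsCompact (A : Set X) :=
  A.isClosed.isCompact

theorem mem_top [ConnectedSpace X] (x : X) : x ∈ (⊤ : Subcontinua X) := mem_univ x

theorem isOpen_setOf_subset {U : Set X} (hU : IsOpen U) :
    IsOpen {A : Subcontinua X | (A : Set X) ⊆ U} :=
  isOpen_generateFrom_of_mem (.inl ⟨U, hU, rfl⟩)

theorem isOpen_setOf_inter_nonempty {U : Set X} (hU : IsOpen U) :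
    IsOpen {A : Subcontinua X | ((A : Set X) ∩ U).Nonempty} :=
  isOpen_generateFrom_of_mem (.inr ⟨U, hU, rfl⟩)

theorem isClosed_setOf_inter_nonempty {F : Set X} (hF : IsClosed F) :
    IsClosed {A : Subcontinua X | ((A : Set X) ∩ F).Nonempty} := by
  rw [← isOpen_compl_iff]
  convert isOpen_setOf_subset hF.isOpen_compl using 1
  ext A
  simp only [mem_compl_iff, mem_ofPred_eq, not_nonempty_iff_eq_empty,
    subset_compl_iff_disjoint_right, disjoint_iff_inter_eq_empty]

theorem isInducing_coe :
    @Topology.IsInducing _ _ _ (TopologicalSpace.vietoris X) ((↑) : Subcontinua X → Set X) := by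
  let _ : TopologicalSpace (Set X) := TopologicalSpace.vietoris X
  refine ⟨?_⟩
  change generateFrom _ = induced _ (generateFrom _)
  rw [induced_generateFrom_eq, image_union]
  congr 2 <;> ext s <;> constructor
  · rintro ⟨U, hU, rfl⟩
    exact ⟨_, ⟨U, hU, rfl⟩, rfl⟩
  · rintro ⟨_, ⟨U, hU, rfl⟩, rfl⟩
    exact ⟨U, hU, rfl⟩
  · rintro ⟨U, hU, rfl⟩
    exact ⟨_, ⟨U, hU, rfl⟩, rfl⟩
  · rintro ⟨_, ⟨U, hU, rfl⟩, rfl⟩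
    exact ⟨U, hU, rfl⟩

theorem isPreconnected_biUnion {K : Set (Subcontinua X)} (hK : IsPreconnected K) :
    IsPreconnected (⋃ A ∈ K, (A : Set X)) := by
  let _ : TopologicalSpace (Set X) := TopologicalSpace.vietoris X
  obtain rfl | ⟨A, hA⟩ := K.eq_empty_or_nonempty
  · simpa only [biUnion_empty] using isPreconnected_empty
  · exact vietoris.isPreconnected_biUnion hK isInducing_coe.continuous.continuousOn
      ⟨A, hA, A.isConnected.isPreconnected⟩

section T1

variable [T1Space X]

instance : Singleton X (Subcontinua X) := ⟨fun x ↦ ⟨{x}, isClosed_singleton, isConnected_singleton⟩⟩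

@[simp]
theorem singleton_le_iff {x : X} {A : Subcontinua X} : {x} ≤ A ↔ x ∈ A :=
  singleton_subset_iff (s := (A : Set X))

theorem continuous_singleton : Continuous (singleton : X → Subcontinua X) := by
  let _ : TopologicalSpace (Set X) := TopologicalSpace.vietoris X
  exact isInducing_coe.continuous_iff.2 vietoris.continuous_singleton

end T1

variable [CompactSpace X]

/-- The underlying nonempty compact set of a subcontinuum of a compact space. -/
def toNonemptyCompacts (A : Subcontinua X) : NonemptyCompacts X :=
  ⟨⟨A, A.isCompact⟩, A.nonempty⟩

theorem isInducing_toNonemptyCompacts :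
    Topology.IsInducing (toNonemptyCompacts : Subcontinua X → NonemptyCompacts X) := by
  let _ : TopologicalSpace (Set X) := TopologicalSpace.vietoris X
  have h : Topology.IsInducing ((↑) : NonemptyCompacts X → Set X) := ⟨rfl⟩
  exact h.of_comp_iff.1 isInducing_coe

variable [T2Space X]

theorem isClosedEmbedding_toNonemptyCompacts :
    Topology.IsClosedEmbedding (toNonemptyCompacts : Subcontinua X → NonemptyCompacts X) := by
  refine ⟨⟨isInducing_toNonemptyCompacts, fun A B h ↦ SetLike.coe_injective <|
    congrArg (fun K : NonemptyCompacts X ↦ (K : Set X)) h⟩, ?_⟩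
  convert isClosed_setOf_isPreconnected (Y := X) using 1
  ext K
  exact ⟨by rintro ⟨A, rfl⟩; exact A.isConnected.isPreconnected,
    fun hK ↦ ⟨⟨K, K.isCompact.isClosed, K.nonempty, hK⟩, rfl⟩⟩

instance : CompactSpace (Subcontinua X) := isClosedEmbedding_toNonemptyCompacts.compactSpace

instance : OrderClosedTopology (Subcontinua X) where
  isClosed_le' := by
    have hsup : ∀ A B : Subcontinua X, A ≤ B ↔
        A.toNonemptyCompacts ⊔ B.toNonemptyCompacts = B.toNonemptyCompacts := fun A B ↦
      (sup_eq_right (a := A.toNonemptyCompacts) (b := B.toNonemptyCompacts)).symm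
    simp only [hsup]
    have hcont := isInducing_toNonemptyCompacts (X := X).continuous
    exact isClosed_eq ((hcont.comp continuous_fst).sup (hcont.comp continuous_snd))
      (hcont.comp continuous_snd)

theorem isClosed_setOf_mem {α : Type*} [TopologicalSpace α] {p : α → X} {f : α → Subcontinua X}
    (hp : Continuous p) (hf : Continuous f) : IsClosed {a | p a ∈ f a} := by
  simpa only [Function.comp_apply, singleton_le_iff] using
    isClosed_le (continuous_singleton.comp hp) hf

/-- The union of a closed connected family of subcontinua. -/
def biUnion (K : Set (Subcontinua X)) (hK : IsClosed K) (hc : IsConnected K) : Subcontinua X where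
  val := ⋃ A ∈ K, (A : Set X)
  property := by
    refine ⟨?_, ?_, isPreconnected_biUnion hc.isPreconnected⟩
    · convert (((isClosed_setOf_mem continuous_fst continuous_snd).inter
        (hK.preimage continuous_snd)).isCompact.image continuous_fst).isClosed using 1
      ext x
      simp only [mem_iUnion, exists_prop, mem_image, mem_inter_iff, mem_ofPred_eq, mem_preimage,
        Prod.exists, exists_and_right, exists_eq_right]
      exact exists_congr fun A ↦ and_comm
    · obtain ⟨A, hA⟩ := hc.nonempty
      exact A.nonempty.mono (subset_biUnion_of_mem (u := fun A : Subcontinua X ↦ (A : Set X)) hA)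

theorem le_biUnion {K : Set (Subcontinua X)} (hK : IsClosed K) (hc : IsConnected K)
    {A : Subcontinua X} (hA : A ∈ K) : A ≤ biUnion K hK hc :=
  subset_biUnion_of_mem (u := fun A : Subcontinua X ↦ (A : Set X)) hA

theorem mem_biUnion {K : Set (Subcontinua X)} {hK : IsClosed K} {hc : IsConnected K} {x : X} :
    x ∈ biUnion K hK hc ↔ ∃ A ∈ K, x ∈ A :=
  mem_iUnion₂.trans (by simp only [exists_prop, SetLike.mem_coe])

/-- The boundary bumping theorem for subcontinua. -/
instance : DenselyOrdered (Subcontinua X) where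
  dense A B hAB := by
    obtain ⟨x, hxB, hxA⟩ := SetLike.exists_of_lt hAB
    obtain ⟨U, V, hU, hV, hAU, hxV, hUV⟩ := normal_separation A.isClosed
      (isClosed_singleton (x := x)) (disjoint_singleton_right.2 hxA)
    have hxU : x ∉ closure U := fun h ↦
      (hUV.closure_left hV).notMem_of_mem_left h (singleton_subset_iff.1 hxV)
    have : ConnectedSpace B := isConnected_iff_connectedSpace.1 B.isConnected
    have : CompactSpace B := isCompact_iff_compactSpace.1 B.isCompact
    obtain ⟨a, ha⟩ := A.nonempty
    let G : Set B := (↑) ⁻¹' U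
    let c : Set B := connectedComponentIn (closure G) ⟨a, hAB.le ha⟩
    have haG : (⟨a, hAB.le ha⟩ : B) ∈ G := hAU ha
    have hcG : c ⊆ (↑) ⁻¹' closure U := (connectedComponentIn_subset _ _).trans
      (continuous_subtype_val.closure_preimage_subset U)
    have hne : ¬ c ⊆ G := not_connectedComponentIn_closure_subset
      (hU.preimage continuous_subtype_val) haG fun h ↦
        hxU (subset_closure (h.ge (mem_univ (⟨x, hxB⟩ : B))))
    let C : Subcontinua X := ⟨(↑) '' c,
      B.isClosed.isClosedEmbedding_subtypeVal.isClosedMap _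
        (isClosed_connectedComponentIn isClosed_closure _),
      (isConnected_connectedComponentIn_iff.2 (subset_closure haG)).image _
        continuous_subtype_val.continuousOn⟩
    have hAC : A ≤ C := by
      have himage : ((↑) '' ((↑) ⁻¹' (A : Set X) : Set B) : Set X) = A :=
        Subtype.image_preimage_coe (B : Set X) A ▸ inter_eq_right.2 hAB.le
      have hpre : IsPreconnected ((↑) ⁻¹' (A : Set X) : Set B) := by
        rw [← Topology.IsInducing.subtypeVal.isPreconnected_image]
        exact himage.symm ▸ A.isConnected.isPreconnected
      rw [← SetLike.coe_subset_coe, ← himage]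
      exact image_mono (hpre.subset_connectedComponentIn ha fun z hz ↦ subset_closure (hAU hz))
    refine ⟨C, lt_of_le_not_ge hAC fun hCA ↦ hne fun z hz ↦ hAU (hCA ⟨z, hz, rfl⟩),
      lt_of_le_not_ge (Subtype.coe_image_subset _ c) fun hBC ↦ ?_⟩
    obtain ⟨z, hz, rfl⟩ := hBC hxB
    exact hxU (hcG hz)

end Subcontinua

namespace Subcontinua

variable {X : Type u} [TopologicalSpace X]

/-- The maximum of `φ` on a subcontinuum. -/
noncomputable def maxOn (φ : C(X, ℝ)) (A : Subcontinua X) : ℝ := sSup (φ '' A)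

/-- The maxima on a subcontinuum of the members of a finite family `S` of functions. Finite
families of functions thus provide the pseudometrics `dist (profile S A) (profile S B)`, which
replace a metric on the hyperspace. -/
noncomputable def profile (S : Finset C(X, ℝ)) (A : Subcontinua X) : S → ℝ := fun ξ ↦ maxOn ξ A

/-- The sum of the maxima on a subcontinuum of the members of `S`; such sums play the role of
Whitney maps. -/
noncomputable def sumMax (S : Finset C(X, ℝ)) (A : Subcontinua X) : ℝ := ∑ ξ ∈ S, maxOn ξ A

/-- `l` controls `S` if nested subcontinua on the same level of `l` have the same `S`-profile. -/
def Controls (l : Subcontinua X → ℝ) (S : Finset C(X, ℝ)) : Prop :=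
  ∀ ⦃A B : Subcontinua X⦄, A ≤ B → l A = l B → profile S A = profile S B

theorem abs_maxOn_sub_le_dist_profile {S : Finset C(X, ℝ)} {ξ : C(X, ℝ)} (hξ : ξ ∈ S)
    (A B : Subcontinua X) : |maxOn ξ A - maxOn ξ B| ≤ dist (profile S A) (profile S B) :=
  dist_le_pi_dist (profile S A) (profile S B) ⟨ξ, hξ⟩

theorem dist_profile_le_iff {S : Finset C(X, ℝ)} {A B : Subcontinua X} {r : ℝ} (hr : 0 ≤ r) :
    dist (profile S A) (profile S B) ≤ r ↔ ∀ ξ ∈ S, |maxOn ξ A - maxOn ξ B| ≤ r :=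
  (dist_pi_le_iff hr).trans Subtype.forall

theorem dist_profile_mono {S T : Finset C(X, ℝ)} (hST : S ⊆ T) (A B : Subcontinua X) :
    dist (profile S A) (profile S B) ≤ dist (profile T A) (profile T B) :=
  (dist_profile_le_iff dist_nonneg).2 fun _ hξ ↦ abs_maxOn_sub_le_dist_profile (hST hξ) A B

theorem Controls.mono {l : Subcontinua X → ℝ} {S T : Finset C(X, ℝ)} (hl : Controls l T)
    (hST : S ⊆ T) : Controls l S := fun _ _ hAB h ↦
  dist_le_zero.1 ((dist_profile_mono hST _ _).trans (dist_eq_zero.2 (hl hAB h)).le)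

theorem Controls.add_monotone {f g : Subcontinua X → ℝ} {S : Finset C(X, ℝ)} (hfS : Controls f S)
    (hf : Monotone f) (hg : Monotone g) : Controls (f + g) S := fun _ _ hAB h ↦
  hfS hAB ((add_eq_add_iff_eq_and_eq (hf hAB) (hg hAB)).1 h).1

theorem Controls.const_smul {f : Subcontinua X → ℝ} {S : Finset C(X, ℝ)} (hf : Controls f S)
    {c : ℝ} (hc : c ≠ 0) : Controls (c • f) S := fun _ _ hAB h ↦
  hf hAB (mul_left_cancel₀ hc h)

theorem _root_.HereditarilyIndecomposable.le_or_le (hhi : HereditarilyIndecomposable X) {x : X}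
    {A B : Subcontinua X} (hA : x ∈ A) (hB : x ∈ B) : A ≤ B ∨ B ≤ A := by
  rcases hhi A B A.isClosed A.isConnected B.isClosed B.isConnected with h | h | h
  · exact .inl h
  · exact .inr h
  · exact absurd ⟨hA, hB⟩ (eq_empty_iff_forall_notMem.1 h x)

theorem Controls.profile_eq_of_mem (hhi : HereditarilyIndecomposable X) {l : Subcontinua X → ℝ}
    {S : Finset C(X, ℝ)} (hl : Controls l S) {x : X} {A B : Subcontinua X} (hA : x ∈ A)
    (hB : x ∈ B) (h : l A = l B) : profile S A = profile S B :=
  (hhi.le_or_le hA hB).elim (fun hAB ↦ hl hAB h) fun hBA ↦ (hl hBA h.symm).symm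

variable [CompactSpace X]

theorem exists_mem_eq_maxOn (φ : C(X, ℝ)) (A : Subcontinua X) : ∃ x ∈ A, φ x = maxOn φ A :=
  (A.isCompact.image φ.continuous).sSup_mem (A.nonempty.image _)

theorem le_maxOn (φ : C(X, ℝ)) {A : Subcontinua X} {x : X} (hx : x ∈ A) : φ x ≤ maxOn φ A :=
  le_csSup (A.isCompact.image φ.continuous).bddAbove ⟨x, hx, rfl⟩

theorem maxOn_lt_iff {φ : C(X, ℝ)} {A : Subcontinua X} {c : ℝ} :
    maxOn φ A < c ↔ ∀ x ∈ A, φ x < c := by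
  refine ⟨fun h x hx ↦ (le_maxOn φ hx).trans_lt h, fun h ↦ ?_⟩
  obtain ⟨x, hx, hxA⟩ := exists_mem_eq_maxOn φ A
  exact hxA ▸ h x hx

theorem lt_maxOn_iff {φ : C(X, ℝ)} {A : Subcontinua X} {c : ℝ} :
    c < maxOn φ A ↔ ∃ x ∈ A, c < φ x := by
  refine ⟨fun h ↦ ?_, fun ⟨x, hx, h⟩ ↦ h.trans_le (le_maxOn φ hx)⟩
  obtain ⟨x, hx, hxA⟩ := exists_mem_eq_maxOn φ A
  exact ⟨x, hx, hxA ▸ h⟩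

theorem monotone_maxOn (φ : C(X, ℝ)) : Monotone (maxOn φ) := fun A B hAB ↦ by
  obtain ⟨x, hx, hxA⟩ := exists_mem_eq_maxOn φ A
  exact hxA ▸ le_maxOn φ (hAB hx)

theorem continuous_maxOn (φ : C(X, ℝ)) : Continuous (maxOn φ) := by
  refine OrderTopology.continuous_iff.2 fun c ↦ ⟨?_, ?_⟩
  · have heq : maxOn φ ⁻¹' Ioi c = {A | (A.1 ∩ φ ⁻¹' Ioi c).Nonempty} :=
      ext fun A ↦ lt_maxOn_iff
    exact heq ▸ isOpen_setOf_inter_nonempty (isOpen_Ioi.preimage φ.continuous)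
  · have heq : maxOn φ ⁻¹' Iio c = {A | A.1 ⊆ φ ⁻¹' Iio c} := ext fun A ↦ maxOn_lt_iff
    exact heq ▸ isOpen_setOf_subset (isOpen_Iio.preimage φ.continuous)

theorem continuous_profile (S : Finset C(X, ℝ)) : Continuous (profile S) :=
  continuous_pi fun ξ ↦ continuous_maxOn ξ.1

theorem continuous_sumMax (S : Finset C(X, ℝ)) : Continuous (sumMax S) :=
  continuous_finsetSum _ fun ξ _ ↦ continuous_maxOn ξ

theorem monotone_sumMax (S : Finset C(X, ℝ)) : Monotone (sumMax S) := fun _ _ hAB ↦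
  Finset.sum_le_sum fun ξ _ ↦ monotone_maxOn ξ hAB

theorem controls_sumMax (S : Finset C(X, ℝ)) : Controls (sumMax S) S := fun _ _ hAB h ↦
  funext fun ξ ↦ (Finset.sum_eq_sum_iff_of_le fun ξ _ ↦ monotone_maxOn ξ hAB).1 h ξ ξ.2

variable [T2Space X]

theorem le_of_forall_maxOn_le {A B : Subcontinua X} (h : ∀ φ, maxOn φ A ≤ maxOn φ B) : A ≤ B := by
  intro x hxA
  by_contra hxB
  obtain ⟨φ, hφB, hφx, -⟩ := exists_continuous_zero_one_of_isClosed B.isClosed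
    (isClosed_singleton (x := x)) (disjoint_singleton_right.2 hxB)
  have hB : maxOn φ B < 1 := maxOn_lt_iff.2 fun y hy ↦ (hφB hy).trans_lt one_pos
  exact ((hφx rfl).ge.trans (le_maxOn φ hxA)).not_gt ((h φ).trans_lt hB)

/-- Lebesgue's number lemma for the pseudometrics given by profiles. -/
theorem exists_profile_lebesgue_number {U : Set (Set (Subcontinua X))}
    (hU : _root_.IsOpenCover U) :
    ∃ S : Finset C(X, ℝ), ∃ ε > 0, ∀ A, ∃ u ∈ U, ∀ B,
      dist (profile S A) (profile S B) < ε → B ∈ u := by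
  classical
  let _ : UniformSpace (Subcontinua X) := uniformSpaceOfCompactR1
  obtain ⟨V, hV, hVU⟩ := lebesgue_number_lemma_sUnion isCompact_univ hU.1 hU.2.ge
  let F : Finset C(X, ℝ) × Ioi (0 : ℝ) → Set (Subcontinua X × Subcontinua X) := fun i ↦
    {p | dist (profile i.1 p.1) (profile i.1 p.2) ≤ i.2}
  have hF : ∀ i, IsClosed (F i) := fun i ↦ isClosed_le
    (((continuous_profile i.1).comp continuous_fst).dist
      ((continuous_profile i.1).comp continuous_snd)) continuous_const
  have hdir : Directed (· ⊇ ·) F := fun i j ↦ ⟨(i.1 ∪ j.1, min i.2 j.2),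
    fun p hp ↦ (dist_profile_mono Finset.subset_union_left _ _).trans (hp.trans (min_le_left _ _)),
    fun p hp ↦ (dist_profile_mono Finset.subset_union_right _ _).trans
      (hp.trans (min_le_right _ _))⟩
  have hdiag : ∀ p ∈ ⋂ i, F i, p.1 = p.2 := fun p hp ↦ by
    have heq : ∀ φ : C(X, ℝ), maxOn φ p.1 = maxOn φ p.2 := fun φ ↦
      eq_of_forall_dist_le fun ε hε ↦
        (abs_maxOn_sub_le_dist_profile (Finset.mem_singleton_self φ) _ _).trans
          (mem_iInter.1 hp ({φ}, ⟨ε, hε⟩))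
    exact le_antisymm (le_of_forall_maxOn_le fun φ ↦ (heq φ).le)
      (le_of_forall_maxOn_le fun φ ↦ (heq φ).ge)
  have : Nonempty (Finset C(X, ℝ) × Ioi (0 : ℝ)) := ⟨(∅, ⟨1, mem_Ioi.2 one_pos⟩)⟩
  obtain ⟨⟨S, ε, hε⟩, hSV⟩ := exists_subset_nhds_of_compactSpace hdir hF fun p hp ↦ by
    obtain ⟨A, B⟩ := p
    obtain rfl : A = B := hdiag _ hp
    exact nhds_le_uniformity A hV
  refine ⟨S, ε, hε, fun A ↦ ?_⟩
  obtain ⟨u, hu, hAu⟩ := hVU A (mem_univ A)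
  exact ⟨u, hu, fun B hB ↦ hAu (hSV (le_of_lt hB))⟩

/-- Hereditary indecomposability makes `Ici A` a chain. -/
theorem exists_le_eq_level [ConnectedSpace X] (hhi : HereditarilyIndecomposable X)
    {l : Subcontinua X → ℝ} (hl : Continuous l) (hmono : Monotone l) {A : Subcontinua X} {s : ℝ}
    (hAs : l A ≤ s) (hs : s ≤ l ⊤) : ∃ B, A ≤ B ∧ l B = s := by
  obtain ⟨a, ha⟩ := A.nonempty
  have hchain : ∀ B C, A ≤ B → A ≤ C → B ≤ C ∨ C ≤ B := fun B C hB hC ↦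
    hhi.le_or_le (hB ha) (hC ha)
  obtain ⟨B, ⟨hAB, hBs⟩, hB⟩ := exists_isGreatest_of_isCompact_of_directedOn
    (isClosed_Ici.inter (isClosed_Iic.preimage hl)).isCompact
    (⟨A, self_mem_Ici, hAs⟩ : (Ici A ∩ l ⁻¹' Iic s).Nonempty) fun B hB C hC ↦
      (hchain B C hB.1 hC.1).elim (fun h ↦ ⟨C, hC, h, le_rfl⟩) fun h ↦ ⟨B, hB, le_rfl, h⟩
  obtain ⟨C, ⟨hAC, hCs⟩, hC⟩ := exists_isLeast_of_isCompact_of_directedOn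
    (isClosed_Ici.inter (isClosed_Ici.preimage hl)).isCompact
    (⟨⊤, mem_Ici.2 le_top, hs⟩ : (Ici A ∩ l ⁻¹' Ici s).Nonempty) fun B hB C hC ↦
      (hchain B C hB.1 hC.1).elim (fun h ↦ ⟨B, hB, le_rfl, h⟩) fun h ↦ ⟨C, hC, h, le_rfl⟩
  by_cases hCB : C ≤ B
  · exact ⟨B, hAB, le_antisymm hBs (le_trans hCs (hmono hCB))⟩
  · obtain ⟨D, hBD, hDC⟩ := exists_between
      (lt_of_le_not_ge ((hchain B C hAB hAC).resolve_right hCB) hCB)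
    rcases le_total (l D) s with h | h
    · exact absurd (hB ⟨hAB.trans hBD.le, h⟩) hBD.not_ge
    · exact absurd (hC ⟨hAB.trans hBD.le, h⟩) hDC.not_ge

/-- A uniform version of `Controls.profile_eq_of_mem`. -/
theorem Controls.exists_pos_forall_dist_profile_lt (hhi : HereditarilyIndecomposable X)
    {l : Subcontinua X → ℝ} (hl : Continuous l) {S : Finset C(X, ℝ)} (hlS : Controls l S) {d : ℝ}
    (hd : 0 < d) : ∃ τ > 0, ∀ x, ∀ A B : Subcontinua X, x ∈ A → x ∈ B → |l A - l B| < τ →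
      dist (profile S A) (profile S B) < d := by
  have hS := continuous_profile S
  have hfar : IsClosed {p : X × Subcontinua X × Subcontinua X |
      d ≤ dist (profile S p.2.1) (profile S p.2.2)} := isClosed_le continuous_const (by fun_prop)
  have hmem : IsClosed {p : X × Subcontinua X × Subcontinua X | p.1 ∈ p.2.1 ∧ p.1 ∈ p.2.2} :=
    (isClosed_setOf_mem continuous_fst continuous_snd.fst).and
      (isClosed_setOf_mem continuous_fst continuous_snd.snd)
  obtain ⟨τ, hτ, hle⟩ := (hmem.inter hfar).isCompact.exists_forall_le' (a := 0)
    (f := fun p ↦ |l p.2.1 - l p.2.2|) (by fun_prop) fun p ⟨⟨hA, hB⟩, hp⟩ ↦ abs_pos.2 fun h ↦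
      (hd.trans_le hp).ne' (dist_eq_zero.2 (hlS.profile_eq_of_mem hhi hA hB (sub_eq_zero.1 h)))
  refine ⟨τ, hτ, fun x A B hA hB hAB ↦ ?_⟩
  by_contra! h
  exact (hle (x, A, B) ⟨⟨hA, hB⟩, h⟩).not_gt hAB

theorem Controls.exists_openCover_dist_profile_lt (hhi : HereditarilyIndecomposable X)
    {l : Subcontinua X → ℝ} (hl : Continuous l) {S : Finset C(X, ℝ)} (hlS : Controls l S) {d : ℝ}
    (hd : 0 < d) : ∃ W : Set (Set X), _root_.IsOpenCover W ∧ ∃ τ > 0, ∀ w ∈ W,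
      ∀ A B : Subcontinua X, ((A : Set X) ∩ closure w).Nonempty →
        ((B : Set X) ∩ closure w).Nonempty → |l A - l B| ≤ τ →
          dist (profile S A) (profile S B) < d := by
  obtain ⟨τ, hτ, hlt⟩ := hlS.exists_pos_forall_dist_profile_lt hhi hl hd
  have hS := continuous_profile S
  have hfar : IsClosed {p : (X × X) × Subcontinua X × Subcontinua X |
      d ≤ dist (profile S p.2.1) (profile S p.2.2)} := isClosed_le continuous_const (by fun_prop)
  have hlevel : IsClosed {p : (X × X) × Subcontinua X × Subcontinua X |
      |l p.2.1 - l p.2.2| ≤ τ / 2} := isClosed_le (by fun_prop) continuous_const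
  have hmem : IsClosed {p : (X × X) × Subcontinua X × Subcontinua X |
      p.1.1 ∈ p.2.1 ∧ p.1.2 ∈ p.2.2} :=
    (isClosed_setOf_mem continuous_fst.fst continuous_snd.fst).and
      (isClosed_setOf_mem continuous_fst.snd continuous_snd.snd)
  have hbad := isClosedMap_fst_of_compactSpace _ ((hmem.inter hlevel).inter hfar)
  refine ⟨_, isOpenCover_setOf_closure_prod_subset hbad.isOpen_compl ?_, τ / 2, half_pos hτ, ?_⟩
  · rintro x ⟨⟨_, A, B⟩, ⟨⟨⟨hA, hB⟩, hAB⟩, hd'⟩, rfl⟩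
    exact (hlt x A B hA hB (hAB.trans_lt (half_lt_self hτ))).not_ge hd'
  · rintro w ⟨-, hw⟩ A B ⟨x, hxA, hx⟩ ⟨y, hyB, hy⟩ hAB
    by_contra! h
    exact hw (mk_mem_prod hx hy) ⟨((x, y), A, B), ⟨⟨⟨hxA, hyB⟩, hAB⟩, h⟩, rfl⟩

/-- The profile of a subcontinuum of level `r a` through the point `p a` depends continuously on
`a`, since it is determined by `p a` and `r a`. -/
theorem continuous_profile_comp_of_level (hhi : HereditarilyIndecomposable X)
    {l : Subcontinua X → ℝ} (hl : Continuous l) {S : Finset C(X, ℝ)} (hlS : Controls l S)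
    {α : Type*} [TopologicalSpace α] {p : α → X} (hp : Continuous p) {r : α → ℝ}
    (hr : Continuous r) {b : α → Subcontinua X} (hpb : ∀ a, p a ∈ b a) (hrb : ∀ a, l (b a) = r a) :
    Continuous fun a ↦ profile S (b a) :=
  continuous_of_isClosed_rel
    ((isClosed_setOf_mem (hp.comp continuous_fst) continuous_snd).inter
      (isClosed_eq (hl.comp continuous_snd) (hr.comp continuous_fst)))
    (continuous_profile S) (fun a ↦ ⟨b a, hpb a, hrb a⟩)
    fun a _ hB ↦ hlS.profile_eq_of_mem hhi hB.1 (hpb a) (hB.2.trans (hrb a).symm)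

end Subcontinua

open Subcontinua

/-- A finite cover of the hyperspace by the balls of radius `radius` about `centers`, with respect
to the profiles of `tests`. Every member of the closed ball about `i` meets the open set `mark i`,
and closed balls of the same `stage` that meet have the same mark. -/
structure MarkedCover (X : Type u) [TopologicalSpace X] where
  /-- The functions whose profiles define the balls. -/
  tests : Finset C(X, ℝ)
  /-- The common radius of the balls. -/
  radius : ℝ
  /-- The centers of the balls. -/
  centers : Finset (Subcontinua X)
  /-- The index of the family of property C that a ball comes from. -/
  stage : Subcontinua X → ℕ
  /-- The open set met by the members of a closed ball. -/
  mark : Subcontinua X → Set X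
  exists_dist_lt : ∀ B : Subcontinua X, ∃ i ∈ centers,
    dist (profile tests B) (profile tests i) < radius
  isOpen_mark : ∀ i ∈ centers, IsOpen (mark i)
  inter_mark_nonempty : ∀ i ∈ centers, ∀ B : Subcontinua X,
    dist (profile tests B) (profile tests i) ≤ radius → ((B : Set X) ∩ mark i).Nonempty
  mark_eq : ∀ i ∈ centers, ∀ j ∈ centers, ∀ B : Subcontinua X,
    dist (profile tests B) (profile tests i) ≤ radius →
    dist (profile tests B) (profile tests j) ≤ radius → stage i = stage j → mark i = mark j

theorem IsCSpace.exists_markedCover {X : Type u} [TopologicalSpace X] [CompactSpace X] [T2Space X]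
    (hC : IsCSpace (Subcontinua X)) {W : ℕ → Set (Set X)} (hW : ∀ j, _root_.IsOpenCover (W j)) :
    ∃ M : MarkedCover X, ∀ i ∈ M.centers, M.mark i ∈ W (M.stage i) := by
  have hmeet : ∀ j, _root_.IsOpenCover
      ((fun w : Set X ↦ {B : Subcontinua X | ((B : Set X) ∩ w).Nonempty}) '' W j) := fun j ↦ by
    refine ⟨forall_mem_image.2 fun w hw ↦ isOpen_setOf_inter_nonempty ((hW j).1 w hw),
      eq_univ_of_forall fun B ↦ ?_⟩
    obtain ⟨x, hx⟩ := B.nonempty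
    obtain ⟨w, hw, hxw⟩ := (hW j).2.ge (mem_univ x)
    exact ⟨_, mem_image_of_mem _ hw, x, hx, hxw⟩
  obtain ⟨V, hV, hVcover⟩ := hC _ hmeet
  have hmark : ∀ j, ∀ v ∈ V j, ∃ w ∈ W j, ∀ B ∈ v, ((B : Set X) ∩ w).Nonempty := fun j v hv ↦ by
    obtain ⟨_, ⟨w, hw, rfl⟩, hvw⟩ := (hV j).2.2 v hv
    exact ⟨w, hw, fun B hB ↦ hvw hB⟩
  choose! w hwW hw using hmark
  obtain ⟨S, ε, hε, hS⟩ := exists_profile_lebesgue_number (U := ⋃ j, V j)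
    ⟨fun v hv ↦ (mem_iUnion.1 hv).elim fun j hj ↦ (hV j).1 v hj, by rwa [sUnion_iUnion]⟩
  choose v hvV hv using hS
  choose stage hstage using fun A ↦ mem_iUnion.1 (hvV A)
  have hball : ∀ i B, dist (profile S B) (profile S i) ≤ ε / 2 → B ∈ v i := fun i B h ↦
    hv i B (dist_comm _ (profile S i) ▸ h.trans_lt (half_lt_self hε))
  obtain ⟨T, -, hT⟩ := (isCompact_univ (X := Subcontinua X)).elim_nhds_subcover
    (fun i ↦ {B | dist (profile S B) (profile S i) < ε / 2}) fun i _ ↦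
      (isOpen_lt ((continuous_profile S).dist continuous_const) continuous_const).mem_nhds
        (by simpa using hε)
  exact ⟨{
    tests := S
    radius := ε / 2
    centers := T
    stage := stage
    mark := fun i ↦ w (stage i) (v i)
    exists_dist_lt := fun B ↦ by simpa using hT (mem_univ B)
    isOpen_mark := fun i _ ↦ (hW _).1 _ (hwW _ _ (hstage i))
    inter_mark_nonempty := fun i _ B hB ↦ hw _ _ (hstage i) B (hball i B hB)
    mark_eq := fun i _ j _ B hi hj hij ↦ by
      have hvij : v i = v j := by
        by_contra hne
        exact ((hV (stage i)).2.1 (hstage i) (hij ▸ hstage j) hne).notMem_of_mem_left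
          (hball i B hi) (hball j B hj)
      rw [hij, hvij] }, fun i _ ↦ hwW _ _ (hstage i)⟩

namespace MarkedCover

variable {X : Type u} [TopologicalSpace X] (M : MarkedCover X)

/-- The open ball of a marked cover about `i`. -/
def inner (i : Subcontinua X) : Set (Subcontinua X) :=
  {B | dist (profile M.tests B) (profile M.tests i) < M.radius}

/-- The closed ball of a marked cover about `i`. -/
def outer (i : Subcontinua X) : Set (Subcontinua X) :=
  {B | dist (profile M.tests B) (profile M.tests i) ≤ M.radius}

/-- The subcontinua contained in some `B` of level `s` lying in a closed ball, and meeting the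
closure of the mark of that ball. -/
def near (l : Subcontinua X → ℝ) (s : ℝ) : Set (Subcontinua X) :=
  ⋃ i ∈ M.centers, ↑(lowerClosure (l ⁻¹' {s} ∩ M.outer i)) ∩
    {A | ((A : Set X) ∩ closure (M.mark i)).Nonempty}

/-- The subcontinua which miss the mark of every open ball containing all the subcontinua of level
`s` above them. -/
def far (l : Subcontinua X → ℝ) (s : ℝ) : Set (Subcontinua X) :=
  ⋂ i ∈ M.centers, ↑(lowerClosure (l ⁻¹' {s} \ M.inner i)) ∪
    {A | ((A : Set X) ∩ M.mark i).Nonempty}ᶜ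

/-- Subcontinua of the same level meeting the closure of the same mark are close, the distance
allowed depending on the stage of the mark. -/
def Fine (l : Subcontinua X → ℝ) (S : Finset C(X, ℝ)) (d : ℕ → ℝ) : Prop :=
  ∀ i ∈ M.centers, ∀ A B : Subcontinua X, ((A : Set X) ∩ closure (M.mark i)).Nonempty →
    ((B : Set X) ∩ closure (M.mark i)).Nonempty → l A = l B →
      dist (profile S A) (profile S B) ≤ d (M.stage i)

variable {M} {l : Subcontinua X → ℝ} {s : ℝ}

theorem Fine.mono {S T : Finset C(X, ℝ)} {d : ℕ → ℝ} (h : M.Fine l T d) (hST : S ⊆ T) :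
    M.Fine l S d := fun i hi A B hA hB hAB ↦
  (dist_profile_mono hST A B).trans (h i hi A B hA hB hAB)

theorem inner_subset_outer (i : Subcontinua X) : M.inner i ⊆ M.outer i :=
  ofPred_subset_ofPred.2 fun _ ↦ le_of_lt

theorem mem_inner_congr {A B i : Subcontinua X} (h : profile M.tests A = profile M.tests B) :
    A ∈ M.inner i ↔ B ∈ M.inner i := by
  rw [inner, mem_ofPred_eq, mem_ofPred_eq, h]

theorem mem_outer_congr {A B i : Subcontinua X} (h : profile M.tests A = profile M.tests B) :
    A ∈ M.outer i ↔ B ∈ M.outer i := by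
  rw [outer, mem_ofPred_eq, mem_ofPred_eq, h]

theorem exists_mem_outer_of_mem_near (hhi : HereditarilyIndecomposable X)
    (hlM : Controls l M.tests) {A B : Subcontinua X} (hA : A ∈ M.near l s) (hB : l B = s) {x : X}
    (hxA : x ∈ A) (hxB : x ∈ B) :
    ∃ i ∈ M.centers, B ∈ M.outer i ∧ ((A : Set X) ∩ closure (M.mark i)).Nonempty := by
  obtain ⟨i, hi, ⟨C, ⟨hC, hCi⟩, hAC⟩, hAi⟩ := mem_iUnion₂.1 hA
  have hCB := hlM.profile_eq_of_mem hhi (hAC hxA) hxB (hC.trans hB.symm)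
  exact ⟨i, hi, (mem_outer_congr hCB).1 hCi, hAi⟩

theorem exists_mem_forall_notMem_of_subset_far (hhi : HereditarilyIndecomposable X)
    (hlM : Controls l M.tests) {K : Set (Subcontinua X)} (hK : K ⊆ M.far l s) {B : Subcontinua X}
    (hB : l B = s) : ∃ x ∈ B, ∀ A ∈ K, x ∉ A := by
  obtain ⟨i, hi, hBi⟩ := M.exists_dist_lt B
  obtain ⟨x, hxB, hxi⟩ := M.inter_mark_nonempty i hi B hBi.le
  refine ⟨x, hxB, fun A hA hxA ↦ ?_⟩
  rcases mem_iInter₂.1 (hK hA) i hi with ⟨C, ⟨hC, hCi⟩, hAC⟩ | hAi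
  · exact hCi ((mem_inner_congr
      (hlM.profile_eq_of_mem hhi hxB (hAC hxA) (hB.trans hC.symm))).1 hBi)
  · exact hAi ⟨x, hxA, hxi⟩

/-- Labelling the points of `α` by the stages of the marks met, at most one mark per stage is
involved, so the oscillation is bounded by the sum of the bounds over all stages. -/
theorem Fine.dist_profile_le {S : Finset C(X, ℝ)} {d : ℕ → ℝ} {D : ℝ}
    (hfine : M.Fine l S d) (hd : ∀ j, 0 ≤ d j) (hD : HasSum d D) {α : Type*} [TopologicalSpace α]
    [PreconnectedSpace α] {b : α → Subcontinua X} (hb : Continuous fun a ↦ profile S (b a))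
    (hlevel : ∀ x y, l (b x) = l (b y)) {B : Subcontinua X}
    (hB : ∀ a, ∃ i ∈ M.centers, B ∈ M.outer i ∧ ((b a : Set X) ∩ closure (M.mark i)).Nonempty)
    (x y : α) : dist (profile S (b x)) (profile S (b y)) ≤ D := by
  choose i hi hBi hbi using hB
  refine (dist_profile_le_iff (hD.nonneg hd)).2 fun ξ hξ ↦
    abs_sub_le_of_hasSum_of_forall_fiber (m := M.stage ∘ i) (f := fun a ↦ maxOn ξ (b a))
      ((continuous_apply (⟨ξ, hξ⟩ : S)).comp hb) hd hD (fun a a' haa' ↦ ?_) x y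
  have hmark : M.mark (i a) = M.mark (i a') :=
    M.mark_eq _ (hi a) _ (hi a') B (hBi a) (hBi a') haa'
  exact (abs_maxOn_sub_le_dist_profile hξ _ _).trans
    (hfine _ (hi a) _ _ (hbi a) (hmark ▸ hbi a') (hlevel a a'))

variable [CompactSpace X]

theorem isOpen_inner (i : Subcontinua X) : IsOpen (M.inner i) :=
  isOpen_lt ((continuous_profile M.tests).dist continuous_const) continuous_const

theorem isClosed_outer (i : Subcontinua X) : IsClosed (M.outer i) :=
  isClosed_le ((continuous_profile M.tests).dist continuous_const) continuous_const

variable [T2Space X]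

theorem isClosed_near (hl : Continuous l) : IsClosed (M.near l s) :=
  M.centers.finite_toSet.isClosed_biUnion fun i _ ↦
    (isClosed_lowerClosure ((isClosed_singleton.preimage hl).inter (isClosed_outer i))).inter
      (isClosed_setOf_inter_nonempty isClosed_closure)

theorem isClosed_far (hl : Continuous l) : IsClosed (M.far l s) :=
  isClosed_biInter fun i hi ↦
    (isClosed_lowerClosure ((isClosed_singleton.preimage hl).sdiff (isOpen_inner i))).union
      (isOpen_setOf_inter_nonempty (M.isOpen_mark i hi)).isClosed_compl

theorem mem_near_or_mem_far [ConnectedSpace X] (hhi : HereditarilyIndecomposable X)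
    (hl : Continuous l) (hmono : Monotone l) (hs : s ≤ l ⊤) {A : Subcontinua X} (hA : l A ≤ s) :
    A ∈ M.near l s ∨ A ∈ M.far l s := by
  refine or_iff_not_imp_right.2 fun hfar ↦ ?_
  simp only [far, mem_iInter, mem_union, not_forall, not_or, SetLike.mem_coe, mem_lowerClosure,
    not_exists, not_and, mem_compl_iff, not_not] at hfar
  obtain ⟨i, hi, hinner, hmark⟩ := hfar
  obtain ⟨B, hAB, hB⟩ := exists_le_eq_level hhi hl hmono hA hs
  have hBi : B ∈ M.outer i := inner_subset_outer i <|
    not_not.1 fun h ↦ hinner B ⟨hB, h⟩ hAB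
  exact mem_biUnion hi ⟨⟨B, ⟨hB, hBi⟩, hAB⟩,
    hmark.mono (inter_subset_inter_right _ subset_closure)⟩

end MarkedCover

namespace Subcontinua

variable {X : Type u} [TopologicalSpace X]

/-- On every subcontinuum of `R` the profiles of `S` vary by at most `c`. -/
def ComponentwiseOscLE (S : Finset C(X, ℝ)) (R : Set (Subcontinua X)) (c : ℝ) : Prop :=
  ∀ K ⊆ R, IsClosed K → IsConnected K → ∀ A ∈ K, ∀ B ∈ K, dist (profile S A) (profile S B) ≤ c

variable [CompactSpace X]

theorem dist_profile_le_of_le {l : Subcontinua X → ℝ} {S : Finset C(X, ℝ)}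
    (hlS : Monotone (l - sumMax S)) {A A' B : Subcontinua X} (hA : A ≤ B) (hA' : A' ≤ B) {a s : ℝ}
    (ha : a ≤ l A) (ha' : a ≤ l A') (hs : l B ≤ s) :
    dist (profile S A) (profile S A') ≤ s - a := by
  have hgap : ∀ C ≤ B, a ≤ l C → ∀ ξ ∈ S, maxOn ξ B - maxOn ξ C ≤ s - a := fun C hC haC ξ hξ ↦ calc
    maxOn ξ B - maxOn ξ C ≤ ∑ ξ ∈ S, (maxOn ξ B - maxOn ξ C) :=
      Finset.single_le_sum (f := fun ξ ↦ maxOn ξ B - maxOn ξ C)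
        (fun ξ _ ↦ sub_nonneg.2 (monotone_maxOn ξ hC)) hξ
    _ = sumMax S B - sumMax S C := Finset.sum_sub_distrib _ _
    _ ≤ l B - l C := sub_le_sub_iff.2 (by linarith [sub_le_sub_iff.1 (hlS hC)])
    _ ≤ s - a := by linarith
  have hnonneg : 0 ≤ s - a := by linarith [sub_le_sub_iff.1 (hlS hA), monotone_sumMax S hA]
  refine (dist_profile_le_iff hnonneg).2 fun ξ hξ ↦ abs_sub_le_iff.2 ⟨?_, ?_⟩
  · linarith [hgap A' hA' ha' ξ hξ, monotone_maxOn ξ hA]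
  · linarith [hgap A hA ha ξ hξ, monotone_maxOn ξ hA']

theorem sumMax_le_of_forall_dist_profile_le {S : Finset C(X, ℝ)} {B : Subcontinua X}
    {b : B → Subcontinua X} (hb : ∀ x : B, ↑x ∈ b x) {D : ℝ}
    (hD : ∀ x y, dist (profile S (b x)) (profile S (b y)) ≤ D) (y : B) :
    sumMax S B ≤ sumMax S (b y) + S.card * D := by
  rw [sumMax, sumMax, ← nsmul_eq_mul, ← Finset.sum_const, ← Finset.sum_add_distrib]
  refine Finset.sum_le_sum fun ξ hξ ↦ ?_
  obtain ⟨x, hx, hxB⟩ := exists_mem_eq_maxOn ξ B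
  have hosc := (abs_maxOn_sub_le_dist_profile hξ _ _).trans (hD ⟨x, hx⟩ y)
  linarith [le_maxOn ξ (hb ⟨x, hx⟩), (abs_sub_le_iff.1 hosc).1]

theorem forall_le_of_exists_forall_notMem [T2Space X] (hhi : HereditarilyIndecomposable X)
    {K : Set (Subcontinua X)} (hK : IsClosed K) (hc : IsConnected K) {A B : Subcontinua X}
    (hA : A ∈ K) (hAB : A ≤ B) (hx : ∃ x ∈ B, ∀ C ∈ K, x ∉ C) : ∀ C ∈ K, C ≤ B := by
  intro C hC
  obtain ⟨a, ha⟩ := A.nonempty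
  obtain ⟨x, hxB, hxK⟩ := hx
  refine (le_biUnion hK hc hC).trans
    ((hhi.le_or_le (hAB ha) (le_biUnion hK hc hA ha)).resolve_left fun h ↦ ?_)
  obtain ⟨C', hC', hxC'⟩ := mem_biUnion.1 (h hxB)
  exact hxK C' hC' hxC'

end Subcontinua

namespace MarkedCover

variable {X : Type u} [TopologicalSpace X]

/-- `l` is a perturbation by at most `e` of the sum of maxima of `Φ` which controls both `S` and the
balls of `M`, and for which the marks are fine with respect to the profiles of `S`. -/
structure IsAdapted (M : MarkedCover X) (l : Subcontinua X → ℝ) (Φ S : Finset C(X, ℝ)) (e : ℝ)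
    (d : ℕ → ℝ) : Prop where
  continuous : Continuous l
  monotone_sub : Monotone (l - sumMax Φ)
  abs_sub_le : ∀ A, |l A - sumMax Φ A| ≤ e
  controls_tests : Controls l M.tests
  controls : Controls l S
  fine : M.Fine l S d

variable [CompactSpace X]

theorem IsAdapted.monotone {M : MarkedCover X} {l : Subcontinua X → ℝ} {Φ S : Finset C(X, ℝ)}
    {e : ℝ} {d : ℕ → ℝ} (h : M.IsAdapted l Φ S e d) : Monotone l := by
  simpa only [Pi.sub_apply, sub_add_cancel] using h.monotone_sub.add (monotone_sumMax Φ)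

variable [T2Space X]

theorem _root_.IsCSpace.exists_isAdapted (hC : IsCSpace (Subcontinua X))
    (hhi : HereditarilyIndecomposable X) (Φ S : Finset C(X, ℝ)) {e : ℝ} (he : 0 < e) {d : ℕ → ℝ}
    (hd : ∀ j, 0 < d j) : ∃ (M : MarkedCover X) (l : Subcontinua X → ℝ), M.IsAdapted l Φ S e d := by
  obtain ⟨c₁, hc₁, hc₁S⟩ := exists_pos_forall_abs_mul_le (continuous_sumMax S) (half_pos he)
  let l₁ : Subcontinua X → ℝ := c₁ • sumMax S + sumMax Φ
  have hmono₁ : Monotone (c₁ • sumMax S) := (monotone_sumMax S).const_smul hc₁.le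
  have hcont₁ : Continuous l₁ := ((continuous_sumMax S).const_smul c₁).add (continuous_sumMax Φ)
  have hcontrol₁ : Controls l₁ S :=
    ((controls_sumMax S).const_smul hc₁.ne').add_monotone hmono₁ (monotone_sumMax Φ)
  choose W hW τ hτ hWτ using fun j ↦ hcontrol₁.exists_openCover_dist_profile_lt hhi hcont₁ (hd j)
  obtain ⟨M, hM⟩ := hC.exists_markedCover hW
  obtain ⟨r, hrτ, hr⟩ := (((Filter.eventually_all_finset M.centers).2 fun i _ ↦
    Ioc_mem_nhdsGT (hτ (M.stage i))).and self_mem_nhdsWithin).exists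
  obtain ⟨c₂, hc₂, hc₂M⟩ := exists_pos_forall_abs_mul_le (continuous_sumMax M.tests)
    (lt_min (half_pos hr) (half_pos he))
  have hmono₂ : Monotone (c₂ • sumMax M.tests) := (monotone_sumMax M.tests).const_smul hc₂.le
  refine ⟨M, l₁ + c₂ • sumMax M.tests, hcont₁.add ((continuous_sumMax M.tests).const_smul c₂),
    ?_, fun A ↦ ?_, ?_, hcontrol₁.add_monotone (hmono₁.add (monotone_sumMax Φ)) hmono₂,
    fun i hi A B hA hB hAB ↦ (hWτ _ _ (hM i hi) A B hA hB ?_).le⟩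
  · have hsub : l₁ + c₂ • sumMax M.tests - sumMax Φ = c₁ • sumMax S + c₂ • sumMax M.tests := by
      simp only [l₁]
      abel
    exact hsub ▸ hmono₁.add hmono₂
  · have h₁ := hc₁S A
    have h₂ := (hc₂M A).trans (min_le_right _ _)
    calc |(l₁ + c₂ • sumMax M.tests) A - sumMax Φ A|
        = |c₁ * sumMax S A + c₂ * sumMax M.tests A| := by
          simp only [l₁, Pi.add_apply, Pi.smul_apply, smul_eq_mul]
          ring_nf
      _ ≤ e := (abs_add_le _ _).trans (by linarith)
  · rw [add_comm]
    exact ((controls_sumMax M.tests).const_smul hc₂.ne').add_monotone hmono₂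
      (hmono₁.add (monotone_sumMax Φ))
  · have hA' := abs_le.1 ((hc₂M A).trans (min_le_left _ _))
    have hB' := abs_le.1 ((hc₂M B).trans (min_le_left _ _))
    have hr' : r ≤ τ (M.stage i) := (hrτ i hi).2
    have hl : l₁ A + c₂ * sumMax M.tests A = l₁ B + c₂ * sumMax M.tests B := hAB
    rw [abs_le]
    constructor <;> linarith

variable [ConnectedSpace X] {M : MarkedCover X} {l : Subcontinua X → ℝ} {Φ S : Finset C(X, ℝ)}
  {e D : ℝ} {d : ℕ → ℝ} {a b s : ℝ}

/-- The subcontinua of level `b` meeting a near family and `B` have similar profiles, so they have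
sums of maxima close to that of `B`, although the level `s` of `B` is much bigger. -/
theorem IsAdapted.exists_mem_forall_notMem_of_subset_near (h : M.IsAdapted l Φ S e d)
    (hhi : HereditarilyIndecomposable X) (hΦS : Φ ⊆ S) (hd : ∀ j, 0 ≤ d j) (hD : HasSum d D)
    (hbs : b + 2 * e + Φ.card * D < s) (hs : s ≤ l ⊤) {K : Set (Subcontinua X)}
    (hK : K ⊆ M.near l s) (hKb : K ⊆ l ⁻¹' Iic b) {B : Subcontinua X} (hB : l B = s) :
    ∃ x ∈ B, ∀ A ∈ K, x ∉ A := by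
  by_contra! hcover
  have hbtop : b ≤ l ⊤ := by
    linarith [(abs_nonneg _).trans (h.abs_sub_le B),
      mul_nonneg (Nat.cast_nonneg (α := ℝ) Φ.card) (hD.nonneg hd)]
  have hlevel : ∀ x : B, ∃ A : Subcontinua X, ↑x ∈ A ∧ l A = b ∧
      ∃ i ∈ M.centers, B ∈ M.outer i ∧ ((A : Set X) ∩ closure (M.mark i)).Nonempty := by
    rintro ⟨x, hx⟩
    obtain ⟨A, hA, hxA⟩ := hcover x hx
    obtain ⟨i, hi, hBi, hAi⟩ := exists_mem_outer_of_mem_near hhi h.controls_tests (hK hA) hB hxA hx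
    obtain ⟨A', hAA', hA'⟩ := exists_le_eq_level hhi h.continuous h.monotone (hKb hA) hbtop
    exact ⟨A', hAA' hxA, hA', i, hi, hBi, hAi.mono (inter_subset_inter_left _ hAA')⟩
  choose A hxA hA hAi using hlevel
  have : ConnectedSpace B := isConnected_iff_connectedSpace.1 B.isConnected
  have hosc : ∀ x y, dist (profile Φ (A x)) (profile Φ (A y)) ≤ D :=
    (h.fine.mono hΦS).dist_profile_le hd hD
      (continuous_profile_comp_of_level hhi h.continuous (h.controls.mono hΦS)
        continuous_subtype_val continuous_const hxA hA) (fun x y ↦ (hA x).trans (hA y).symm) hAi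
  obtain ⟨x, hx⟩ := B.nonempty
  linarith [sumMax_le_of_forall_dist_profile_le hxA hosc ⟨x, hx⟩, hA ⟨x, hx⟩,
    (abs_sub_le_iff.1 (h.abs_sub_le B)).1, (abs_sub_le_iff.1 (h.abs_sub_le (A ⟨x, hx⟩))).2]

theorem IsAdapted.componentwiseOscLE (h : M.IsAdapted l Φ S e d)
    (hhi : HereditarilyIndecomposable X) (hbs : b ≤ s) (hs : s ≤ l ⊤) {R : Set (Subcontinua X)}
    (hR : R ⊆ l ⁻¹' Icc a b)
    (hmiss : ∀ K ⊆ R, ∀ B : Subcontinua X, l B = s → ∃ x ∈ B, ∀ A ∈ K, x ∉ A) :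
    ComponentwiseOscLE Φ R (s - a) := by
  intro K hKR hK hc A hA A' hA'
  obtain ⟨B, hAB, hB⟩ := exists_le_eq_level hhi h.continuous h.monotone
    ((hR (hKR hA)).2.trans hbs) hs
  have hKB := forall_le_of_exists_forall_notMem hhi hK hc hA hAB (hmiss K hKR B hB)
  exact dist_profile_le_of_le h.monotone_sub hAB (hKB A' hA') (hR (hKR hA)).1 (hR (hKR hA')).1
    hB.le

theorem IsAdapted.componentwiseOscLE_near_inter_level (h : M.IsAdapted l Φ S e d)
    (hhi : HereditarilyIndecomposable X) (hd : ∀ j, 0 ≤ d j) (hD : HasSum d D) (hbs : b ≤ s)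
    (hs : s ≤ l ⊤) {R : Set (Subcontinua X)} (hR : R ⊆ M.near l s) (hRb : R ⊆ l ⁻¹' Iic b)
    (hmiss : ∀ K ⊆ R, ∀ B : Subcontinua X, l B = s → ∃ x ∈ B, ∀ A ∈ K, x ∉ A) (t : ℝ) :
    ComponentwiseOscLE S (R ∩ l ⁻¹' {t}) D := by
  intro K hKR hK hc A hA A' hA'
  obtain ⟨B, hAB, hB⟩ := exists_le_eq_level hhi h.continuous h.monotone
    ((hRb (hKR hA).1).out.trans hbs) hs
  have hKB := forall_le_of_exists_forall_notMem hhi hK hc hA hAB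
    (hmiss K (hKR.trans inter_subset_left) B hB)
  have : ConnectedSpace K := isConnected_iff_connectedSpace.1 hc
  refine h.fine.dist_profile_le hd hD (B := B) (b := ((↑) : K → Subcontinua X))
    ((continuous_profile S).comp continuous_subtype_val)
    (fun C C' ↦ (hKR C.2).2.trans (hKR C'.2).2.symm) (fun C ↦ ?_) ⟨A, hA⟩ ⟨A', hA'⟩
  obtain ⟨x, hx⟩ := C.1.nonempty
  exact exists_mem_outer_of_mem_near hhi h.controls_tests (hR (hKR C.2).1) hB hx (hKB C C.2 hx)

theorem IsAdapted.exists_slab_cover (h : M.IsAdapted l Φ S e d)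
    (hhi : HereditarilyIndecomposable X) (hΦS : Φ ⊆ S) (hd : ∀ j, 0 ≤ d j) (hD : HasSum d D)
    (hbs : b + 2 * e + Φ.card * D < s) (a : ℝ) : ∃ P Q : Set (Subcontinua X), IsClosed P ∧
      IsClosed Q ∧ P ∪ Q = l ⁻¹' Icc a b ∧ ComponentwiseOscLE Φ P (s - a) ∧
      ComponentwiseOscLE Φ Q (s - a) ∧ ∀ t, ComponentwiseOscLE S (P ∩ l ⁻¹' {t}) D := by
  have hslab : IsClosed (l ⁻¹' Icc a b) := isClosed_Icc.preimage h.continuous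
  rcases lt_or_ge (l ⊤) s with hs | hs
  · refine ⟨∅, l ⁻¹' Icc a b, isClosed_empty, hslab, empty_union _, ?_, fun K hK _ _ A hA A' hA' ↦
      dist_profile_le_of_le h.monotone_sub le_top le_top (hK hA).1 (hK hA').1 hs.le, fun t ↦ ?_⟩
    · exact fun K hK _ hc ↦ absurd (hc.nonempty.mono hK) not_nonempty_empty
    · exact fun K hK _ hc ↦
        absurd (hc.nonempty.mono (hK.trans inter_subset_left)) not_nonempty_empty
  have hb : b ≤ s := by
    linarith [(abs_nonneg _).trans (h.abs_sub_le ⊤),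
      mul_nonneg (Nat.cast_nonneg (α := ℝ) Φ.card) (hD.nonneg hd)]
  have hnear : ∀ K ⊆ M.near l s ∩ l ⁻¹' Icc a b, ∀ B : Subcontinua X, l B = s →
      ∃ x ∈ B, ∀ A ∈ K, x ∉ A := fun K hK B hB ↦
    h.exists_mem_forall_notMem_of_subset_near hhi hΦS hd hD hbs hs (hK.trans inter_subset_left)
      (fun A hA ↦ (hK hA).2.2) hB
  refine ⟨M.near l s ∩ l ⁻¹' Icc a b, M.far l s ∩ l ⁻¹' Icc a b,
    (isClosed_near h.continuous).inter hslab, (isClosed_far h.continuous).inter hslab, ?_,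
    h.componentwiseOscLE hhi hb hs inter_subset_right hnear,
    h.componentwiseOscLE hhi hb hs inter_subset_right fun K hK B hB ↦
      exists_mem_forall_notMem_of_subset_far hhi h.controls_tests (hK.trans inter_subset_left) hB,
    h.componentwiseOscLE_near_inter_level hhi hd hD hb hs inter_subset_left
      (fun A hA ↦ hA.2.2) hnear⟩
  rw [← union_inter_distrib_right]
  exact inter_eq_right.2 fun A hA ↦ mem_near_or_mem_far hhi h.continuous h.monotone hs
    (hA.2.trans hb)

end MarkedCover

theorem IsCSpace.exists_level_slab_cover {X : Type u} [TopologicalSpace X] [CompactSpace X]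
    [T2Space X] [ConnectedSpace X] (hC : IsCSpace (Subcontinua X))
    (hhi : HereditarilyIndecomposable X) {Φ S : Finset C(X, ℝ)} (hΦS : Φ ⊆ S) {θ δ : ℝ}
    (hθ : 0 < θ) (hδ : 0 < δ) : ∃ l : Subcontinua X → ℝ, Continuous l ∧
      (∀ A, |l A - sumMax Φ A| ≤ θ / 8) ∧ ∀ a b, ∃ P Q : Set (Subcontinua X), IsClosed P ∧
        IsClosed Q ∧ P ∪ Q = l ⁻¹' Icc a b ∧ ComponentwiseOscLE Φ P (b + θ - a) ∧
        ComponentwiseOscLE Φ Q (b + θ - a) ∧ ∀ t, ComponentwiseOscLE S (P ∩ l ⁻¹' {t}) δ := by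
  obtain ⟨D, hDθ, hD⟩ : ∃ D, Φ.card * D < θ / 2 ∧ D ∈ Ioc 0 δ := by
    have hsmall : ∀ᶠ D : ℝ in nhds 0, Φ.card * D < θ / 2 :=
      ((continuous_const_mul (Φ.card : ℝ)).tendsto' 0 0 (mul_zero _)).eventually_lt_const
        (half_pos hθ)
    exact ((hsmall.filter_mono nhdsWithin_le_nhds).and (Ioc_mem_nhdsGT hδ)).exists
  have hd : ∀ j : ℕ, 0 < D / 2 / 2 ^ j := fun j ↦ by have := hD.1; positivity
  obtain ⟨M, l, h⟩ := hC.exists_isAdapted hhi Φ S (e := θ / 8) (by positivity) hd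
  refine ⟨l, h.continuous, h.abs_sub_le, fun a b ↦ ?_⟩
  obtain ⟨P, Q, hP, hQ, hPQ, hPosc, hQosc, hlevel⟩ := h.exists_slab_cover hhi hΦS
    (fun j ↦ (hd j).le) (hasSum_geometric_two' D) (b := b) (s := b + θ) (by linarith) a
  exact ⟨P, Q, hP, hQ, hPQ, hPosc, hQosc, fun t K hK hKc hc A hA A' hA' ↦
    (hlevel t K hK hKc hc A hA A' hA').trans hD.2⟩

section Covering

variable {Y : Type u} [TopologicalSpace Y] {U F G : Set (Set Y)} {P Q R : Set Y}

/-- `F` is a finite family of pairwise disjoint open sets refining `U`. -/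
structure IsDisjointRefinement (U F : Set (Set Y)) : Prop where
  finite : F.Finite
  isOpen : ∀ s ∈ F, IsOpen s
  pairwiseDisjoint : F.PairwiseDisjoint id
  refines : Refines F U

/-- `P` is covered by finitely many pairwise disjoint open sets refining `U`. -/
def DisjointlyCoverable (U : Set (Set Y)) (P : Set Y) : Prop :=
  ∃ F, IsDisjointRefinement U F ∧ P ⊆ ⋃₀ F

theorem DisjointlyCoverable.mono (h : DisjointlyCoverable U Q) (hPQ : P ⊆ Q) :
    DisjointlyCoverable U P :=
  let ⟨F, hF, hQF⟩ := h
  ⟨F, hF, hPQ.trans hQF⟩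

theorem IsDisjointRefinement.image (hF : IsDisjointRefinement U F) {f : Set Y → Set Y}
    (hf : ∀ s, f s ⊆ s) (hopen : ∀ s ∈ F, IsOpen (f s)) : IsDisjointRefinement U (f '' F) where
  finite := hF.finite.image f
  isOpen := forall_mem_image.2 hopen
  pairwiseDisjoint := by
    rintro _ ⟨s, hs, rfl⟩ _ ⟨t, ht, rfl⟩ hst
    exact (hF.pairwiseDisjoint hs ht (ne_of_apply_ne f hst)).mono (hf s) (hf t)
  refines := forall_mem_image.2 fun s hs ↦
    let ⟨u, hu, hsu⟩ := hF.refines s hs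
    ⟨u, hu, (hf s).trans hsu⟩

theorem IsDisjointRefinement.image_inter (hF : IsDisjointRefinement U F) {N : Set Y}
    (hN : IsOpen N) : IsDisjointRefinement U ((· ∩ N) '' F) :=
  hF.image (fun _ ↦ inter_subset_left) fun s hs ↦ (hF.isOpen s hs).inter hN

theorem IsDisjointRefinement.union (hF : IsDisjointRefinement U F) (hG : IsDisjointRefinement U G)
    (hFG : ∀ s ∈ F, ∀ t ∈ G, Disjoint s t) : IsDisjointRefinement U (F ∪ G) where
  finite := hF.finite.union hG.finite
  isOpen := union_subset hF.isOpen hG.isOpen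
  pairwiseDisjoint := pairwiseDisjoint_union.2 ⟨hF.pairwiseDisjoint, hG.pairwiseDisjoint,
    fun s hs t ht _ ↦ hFG s hs t ht⟩
  refines := union_subset hF.refines hG.refines

theorem DisjointlyCoverable.union [NormalSpace Y] (hP : DisjointlyCoverable U P)
    (hQ : DisjointlyCoverable U Q) (hPc : IsClosed P) (hQc : IsClosed Q) (hPQ : Disjoint P Q) :
    DisjointlyCoverable U (P ∪ Q) := by
  obtain ⟨V, W, hV, hW, hPV, hQW, hVW⟩ := normal_separation hPc hQc hPQ
  obtain ⟨F, hF, hPF⟩ := hP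
  obtain ⟨G, hG, hQG⟩ := hQ
  refine ⟨_, (hF.image_inter hV).union (hG.image_inter hW) ?_, ?_⟩
  · rintro _ ⟨s, -, rfl⟩ _ ⟨t, -, rfl⟩
    exact hVW.mono inter_subset_right inter_subset_right
  · simp only [sUnion_union, sUnion_image, ← iUnion₂_inter, ← sUnion_eq_biUnion]
    exact union_subset_union (subset_inter hPF hPV) (subset_inter hQG hQW)

theorem disjointlyCoverable_of_subset {s u : Set Y} (hs : IsOpen s) (hu : u ∈ U) (hsu : s ⊆ u)
    (hP : P ⊆ s) : DisjointlyCoverable U P :=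
  ⟨{s}, ⟨finite_singleton s, forall_eq.2 hs, pairwiseDisjoint_singleton s id,
    forall_eq.2 ⟨u, hu, hsu⟩⟩, hP.trans (sUnion_singleton s).ge⟩

theorem disjointlyCoverable_of_forall_isConnected [CompactSpace Y] [T2Space Y]
    (hU : ∀ u ∈ U, IsOpen u) (hP : IsClosed P)
    (h : ∀ K ⊆ P, IsClosed K → IsConnected K → ∃ u ∈ U, K ⊆ u) : DisjointlyCoverable U P := by
  have : CompactSpace P := isCompact_iff_compactSpace.1 hP.isCompact
  have hemb := hP.isClosedEmbedding_subtypeVal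
  suffices hind : ∃ C : Set P, IsClopen C ∧ univ ⊆ C ∧ DisjointlyCoverable U (Subtype.val '' C) by
    obtain ⟨C, -, hC, hCU⟩ := hind
    exact hCU.mono fun x hx ↦ ⟨⟨x, hx⟩, hC trivial, rfl⟩
  refine isCompact_univ.induction_on
    (p := fun t ↦ ∃ C : Set P, IsClopen C ∧ t ⊆ C ∧ DisjointlyCoverable U (Subtype.val '' C)) ?_
    (fun s t hst ⟨C, hC, htC, hCU⟩ ↦ ⟨C, hC, hst.trans htC, hCU⟩) ?_ fun x _ ↦ ?_
  · exact ⟨∅, isClopen_empty, subset_rfl, ∅, ⟨finite_empty, by simp, by simp, by simp [Refines]⟩,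
      by simp⟩
  · rintro s t ⟨C, hC, hsC, hCU⟩ ⟨D, hD, htD, hDU⟩
    refine ⟨C \ D ∪ D, (hC.diff hD).union hD, ?_, ?_⟩
    · rw [sdiff_union_self]
      exact union_subset_union hsC htD
    · rw [image_union]
      exact (hCU.mono (image_mono sdiff_subset)).union hDU (hemb.isClosedMap _ (hC.diff hD).1)
        (hemb.isClosedMap _ hD.1)
        ((disjoint_image_iff Subtype.val_injective).2 disjoint_sdiff_self_left)
  · obtain ⟨u, hu, hxu⟩ := h ((↑) '' connectedComponent x) (Subtype.coe_image_subset _ _)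
      (hemb.isClosedMap _ isClosed_connectedComponent)
      (isConnected_connectedComponent.image _ continuous_subtype_val.continuousOn)
    obtain ⟨Z, hZ, hxZ, hZu⟩ := exists_isClopen_of_connectedComponent_subset
      ((hU u hu).preimage continuous_subtype_val) (image_subset_iff.1 hxu)
    exact ⟨Z, mem_nhdsWithin_of_mem_nhds (hZ.2.mem_nhds hxZ), Z, hZ, subset_rfl,
      disjointlyCoverable_of_subset (hU u hu) hu subset_rfl (image_subset_iff.2 hZu)⟩

/-- Sets of `G` contained in a member of `F` are absorbed by it; the others miss `O`. -/
theorem IsDisjointRefinement.disjointlyCoverable_union (hF : IsDisjointRefinement U F) {O : Set Y}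
    (hO : IsOpen O) (hG : IsDisjointRefinement (F ∪ (· \ closure O) '' U) G) :
    DisjointlyCoverable U (⋃₀ F ∩ O ∪ ⋃₀ G) := by
  let N : Set Y → Set Y := fun s ↦ s ∩ O ∪ ⋃₀ {g ∈ G | g ⊆ s}
  have hF' : IsDisjointRefinement U (N '' F) := hF.image
    (fun s ↦ union_subset inter_subset_left (sUnion_subset fun g hg ↦ hg.2)) fun s hs ↦
      ((hF.isOpen s hs).inter hO).union (isOpen_sUnion fun g hg ↦ hG.isOpen g hg.1)
  have hgU : ∀ g ∈ {g ∈ G | ∀ s ∈ F, ¬ g ⊆ s}, ∃ u ∈ U, g ⊆ u \ closure O := by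
    rintro g ⟨hg, hgF⟩
    obtain ⟨s, hs | ⟨u, hu, rfl⟩, hgs⟩ := hG.refines g hg
    exacts [absurd hgs (hgF s hs), ⟨u, hu, hgs⟩]
  have hG' : IsDisjointRefinement U {g ∈ G | ∀ s ∈ F, ¬ g ⊆ s} :=
    ⟨hG.finite.subset (sep_subset _ _), fun g hg ↦ hG.isOpen g hg.1,
      hG.pairwiseDisjoint.subset (sep_subset _ _), fun g hg ↦
        let ⟨u, hu, hgu⟩ := hgU g hg
        ⟨u, hu, hgu.trans sdiff_subset⟩⟩
  refine ⟨_, hF'.union hG' ?_, union_subset ?_ ?_⟩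
  · rintro _ ⟨s, hs, rfl⟩ g hg
    refine disjoint_union_left.2 ⟨?_, disjoint_sUnion_left.2 fun g' hg' ↦
      hG.pairwiseDisjoint hg'.1 hg.1 (by rintro rfl; exact hg.2 s hs hg'.2)⟩
    obtain ⟨u, -, hgu⟩ := hgU g hg
    exact disjoint_left.2 fun x hxs hxg ↦ (hgu hxg).2 (subset_closure hxs.2)
  · rintro x ⟨⟨s, hs, hxs⟩, hxO⟩
    exact ⟨N s, .inl ⟨s, hs, rfl⟩, .inl ⟨hxs, hxO⟩⟩
  · rintro x ⟨g, hg, hxg⟩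
    by_cases hgF : ∀ s ∈ F, ¬ g ⊆ s
    · exact ⟨g, .inr ⟨hg, hgF⟩, hxg⟩
    · push Not at hgF
      obtain ⟨s, hs, hgs⟩ := hgF
      exact ⟨N s, .inl ⟨s, hs, rfl⟩, .inr ⟨g, ⟨hg, hgs⟩, hxg⟩⟩

theorem DisjointlyCoverable.exists_isOpenCover_forall_union [NormalSpace Y] (hU : IsOpenCover U)
    (hPc : IsClosed P) (hP : DisjointlyCoverable U P) : ∃ W : Set (Set Y), IsOpenCover W ∧
      ∀ R, DisjointlyCoverable W R → DisjointlyCoverable U (P ∪ R) := by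
  obtain ⟨F, hF, hPF⟩ := hP
  obtain ⟨O, hO, hPO, hOF⟩ := normal_exists_closure_subset hPc (isOpen_sUnion hF.isOpen) hPF
  refine ⟨F ∪ (· \ closure O) '' U, ⟨union_subset hF.isOpen (forall_mem_image.2 fun u hu ↦
    (hU.1 u hu).sdiff isClosed_closure), eq_univ_of_forall fun x ↦ ?_⟩, fun R ⟨G, hG, hRG⟩ ↦
      (hF.disjointlyCoverable_union hO hG).mono (union_subset_union (subset_inter hPF hPO) hRG)⟩
  by_cases hx : x ∈ closure O
  · obtain ⟨s, hs, hxs⟩ := hOF hx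
    exact ⟨s, .inl hs, hxs⟩
  · obtain ⟨u, hu, hxu⟩ : x ∈ ⋃₀ U := hU.2 ▸ mem_univ x
    exact ⟨_, .inr ⟨u, hu, rfl⟩, hxu, hx⟩

theorem exists_isOpen_swelling_of_iInter_eq_empty {ι : Type*} [Finite ι] [NormalSpace Y]
    {A : ι → Set Y} (hA : ∀ i, IsClosed (A i)) (hempty : ⋂ i, A i = ∅) :
    ∃ N : ι → Set Y, (∀ i, IsOpen (N i)) ∧ (∀ i, A i ⊆ N i) ∧ ⋂ i, N i = ∅ := by
  obtain ⟨B, hB, hBc, hBA⟩ := exists_iUnion_eq_closed_subset (fun i ↦ (hA i).isOpen_compl)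
    (fun x ↦ toFinite _) (by rw [← compl_iInter, hempty, compl_empty])
  refine ⟨fun i ↦ (B i)ᶜ, fun i ↦ (hBc i).isOpen_compl, fun i ↦ subset_compl_comm.1 (hBA i), ?_⟩
  rw [← compl_iUnion, hB, compl_univ]

theorem exists_refinement_ncard_lt {ι : Type*} [Finite ι] [NormalSpace Y] {A : ι → Set Y}
    (hA : ∀ i, IsClosed (A i)) (hAU : ∀ i, DisjointlyCoverable U (A i)) (huniv : ⋃ i, A i = univ)
    (hempty : ⋂ i, A i = ∅) : ∃ V : Set (Set Y), V.Finite ∧ IsOpenCover V ∧ Refines V U ∧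
      ∀ x, {v ∈ V | x ∈ v}.ncard < Nat.card ι := by
  obtain ⟨N, hN, hAN, hNempty⟩ := exists_isOpen_swelling_of_iInter_eq_empty hA hempty
  choose F hF hAF using hAU
  have hFN := fun i ↦ (hF i).image_inter (hN i)
  refine ⟨⋃ i, (· ∩ N i) '' F i, finite_iUnion fun i ↦ (hFN i).finite,
    ⟨fun v hv ↦ ?_, ?_⟩, fun v hv ↦ ?_, fun x ↦ ?_⟩
  · obtain ⟨i, hi⟩ := mem_iUnion.1 hv
    exact (hFN i).isOpen v hi
  · refine eq_univ_of_forall fun x ↦ ?_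
    obtain ⟨i, hi⟩ := mem_iUnion.1 (huniv ▸ mem_univ x)
    obtain ⟨s, hs, hxs⟩ := hAF i hi
    exact ⟨s ∩ N i, mem_iUnion.2 ⟨i, s, hs, rfl⟩, hxs, hAN i hi⟩
  · obtain ⟨i, hi⟩ := mem_iUnion.1 hv
    exact (hFN i).refines v hi
  · have hsub : {v ∈ ⋃ i, (· ∩ N i) '' F i | x ∈ v} ⊆
        (fun i ↦ ⋃₀ {v ∈ (· ∩ N i) '' F i | x ∈ v}) '' {i | x ∈ N i} := by
      rintro v ⟨hv, hxv⟩
      obtain ⟨i, hi⟩ := mem_iUnion.1 hv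
      have huniq : {w ∈ (· ∩ N i) '' F i | x ∈ w} = {v} :=
        eq_singleton_iff_unique_mem.2 ⟨⟨hi, hxv⟩, fun w hw ↦
          (hFN i).pairwiseDisjoint.elim_set hw.1 hi x hw.2 hxv⟩
      obtain ⟨s, -, rfl⟩ := hi
      exact ⟨i, hxv.2, (congrArg sUnion huniq).trans (sUnion_singleton _)⟩
    have hne : {i | x ∈ N i} ≠ univ := fun h ↦
      notMem_empty x (hNempty ▸ mem_iInter.2 fun i ↦ h.ge (mem_univ i))
    exact ((ncard_le_ncard hsub).trans ncard_image_le).trans_lt (ncard_lt_card hne)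

theorem exists_refinement_ncard_le {ι : Type*} [Finite ι] [Nonempty ι] [NormalSpace Y]
    {A : ι → Set Y} (hP : IsClosed P) (hA : ∀ i, IsClosed (A i))
    (hAU : ∀ i, DisjointlyCoverable U (A i)) (huniv : P ∪ ⋃ i, A i = univ)
    (hPU : DisjointlyCoverable U (P ∪ ⋂ i, A i)) : ∃ V : Set (Set Y), V.Finite ∧ IsOpenCover V ∧
      Refines V U ∧ ∀ x, {v ∈ V | x ∈ v}.ncard ≤ Nat.card ι := by
  obtain ⟨F, hF, hPF⟩ := hPU
  obtain ⟨O, hO, hPO, hOF⟩ := normal_exists_closure_subset (hP.union (isClosed_iInter hA))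
    (isOpen_sUnion hF.isOpen) hPF
  let B : Option ι → Set Y := fun i ↦ i.elim (closure O) fun i ↦ A i \ O
  have huniv' : ⋃ i, B i = univ := by
    rw [iUnion_option, ← univ_subset_iff, ← huniv]
    refine union_subset ?_ fun x hx ↦ ?_
    · exact (subset_union_left.trans hPO).trans (subset_closure.trans subset_union_left)
    · obtain ⟨i, hi⟩ := mem_iUnion.1 hx
      exact (em (x ∈ O)).imp (@subset_closure _ _ _ x) fun hxO ↦ mem_iUnion.2 ⟨i, hi, hxO⟩
  have hempty : ⋂ i, B i = ∅ := by
    refine eq_empty_of_forall_notMem fun x hx ↦ ?_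
    have hxA : ∀ i, x ∈ A i \ O := fun i ↦ mem_iInter.1 hx (some i)
    exact (hxA (Classical.arbitrary ι)).2 (hPO (.inr (mem_iInter.2 fun i ↦ (hxA i).1)))
  obtain ⟨V, hVf, hV, hVU, hVcard⟩ := exists_refinement_ncard_lt
    (Option.forall.2 ⟨isClosed_closure, fun i ↦ (hA i).sdiff hO⟩)
    (Option.forall.2 ⟨⟨F, hF, hOF⟩, fun i ↦ (hAU i).mono sdiff_subset⟩) huniv' hempty
  refine ⟨V, hVf, hV, hVU, fun x ↦ Nat.lt_succ_iff.1 ?_⟩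
  rw [Nat.succ_eq_add_one, ← Finite.card_option]
  exact hVcard x

end Covering

section Slabs

variable {Y : Type*} [TopologicalSpace Y] {l : Y → ℝ} {R : ℤ → Set Y} {c d p : ℝ}

theorem exists_subset_of_isConnected_of_subset_iUnion (hl : Continuous l) (hdp : d < c + p)
    (hR : ∀ i, R i ⊆ l ⁻¹' Icc (c + i * p) (d + i * p)) {K : Set Y} (hK : IsConnected K)
    (hKR : K ⊆ ⋃ i, R i) : ∃ i, K ⊆ R i := by
  have hle : ∀ A ∈ K, ∀ B ∈ K, ∀ i j, A ∈ R i → B ∈ R j → j ≤ i := by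
    intro A hA B hB i j hAi hBj
    obtain ⟨hAl, hAr⟩ := hR i hAi
    have hp : 0 ≤ p := by linarith
    by_contra! hij
    have hij' : ((i + 1 : ℤ) : ℝ) * p ≤ j * p := by gcongr; exact hij
    push_cast at hij'
    obtain ⟨C, hC, hCl⟩ := hK.isPreconnected.intermediate_value hA hB hl.continuousOn
      (show (d + i * p + (c + (i + 1) * p)) / 2 ∈ Icc (l A) (l B) from
        ⟨by linarith, by linarith [(hR j hBj).1]⟩)
    obtain ⟨k, hk⟩ := mem_iUnion.1 (hKR hC)
    obtain ⟨hCl', hCr'⟩ := hR k hk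
    rcases le_or_gt k i with hki | hki
    · have : (k : ℝ) * p ≤ i * p := by gcongr
      linarith
    · have : ((i + 1 : ℤ) : ℝ) * p ≤ k * p := by gcongr; exact hki
      push_cast at this
      linarith
  obtain ⟨A, hA⟩ := hK.nonempty
  obtain ⟨i, hi⟩ := mem_iUnion.1 (hKR hA)
  refine ⟨i, fun B hB ↦ ?_⟩
  obtain ⟨j, hj⟩ := mem_iUnion.1 (hKR hB)
  rwa [le_antisymm (hle B hB A hA j i hj hi) (hle A hA B hB i j hi hj)]

theorem locallyFinite_Icc_add_int_mul (c d : ℝ) (hp : 0 < p) :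
    LocallyFinite fun i : ℤ ↦ Icc (c + i * p) (d + i * p) := by
  intro x
  refine ⟨Ioo (x - 1) (x + 1), Ioo_mem_nhds (sub_one_lt x) (lt_add_one x),
    (finite_Icc ⌊(x - 1 - d) / p⌋ ⌈(x + 1 - c) / p⌉).subset ?_⟩
  rintro i ⟨y, ⟨hyl, hyr⟩, hxl, hxr⟩
  refine ⟨Int.cast_le.1 ((Int.floor_le _).trans (?_ : _ ≤ (i : ℝ))),
    Int.cast_le.1 ((?_ : (i : ℝ) ≤ _).trans (Int.le_ceil _))⟩
  · rw [div_le_iff₀ hp]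
    linarith
  · rw [le_div_iff₀ hp]
    linarith

theorem isClosed_iUnion_of_subset_preimage_Icc (hl : Continuous l) (hp : 0 < p)
    (hR : ∀ i, R i ⊆ l ⁻¹' Icc (c + i * p) (d + i * p)) (hc : ∀ i, IsClosed (R i)) :
    IsClosed (⋃ i, R i) :=
  (((locallyFinite_Icc_add_int_mul c d hp).preimage_continuous hl).subset hR).isClosed_iUnion hc

theorem exists_mem_Icc_add_int_mul {θ : ℝ} (hθ : 0 < θ) (t : ℝ) : ∃ i : ℤ,
    t ∈ Icc (0 + i * (2 * θ)) (θ + i * (2 * θ)) ∨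
      t ∈ Icc (θ + i * (2 * θ)) (2 * θ + i * (2 * θ)) := by
  obtain ⟨i, ⟨hi₀, hi₁⟩, -⟩ := existsUnique_sub_zsmul_mem_Ico (mul_pos two_pos hθ) t 0
  rw [zsmul_eq_mul] at hi₀ hi₁
  refine ⟨i, (le_total t (θ + i * (2 * θ))).imp (fun h ↦ ⟨?_, h⟩) fun h ↦ ⟨h, ?_⟩⟩ <;> linarith

theorem eq_of_mem_isConnected_of_subset_iUnion_Icc {θ : ℝ} (hθ : 0 < θ) (hl : Continuous l)
    {K : Set Y} (hK : IsConnected K)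
    (h₀ : K ⊆ ⋃ i : ℤ, l ⁻¹' Icc (0 + i * (2 * θ)) (θ + i * (2 * θ)))
    (h₁ : K ⊆ ⋃ i : ℤ, l ⁻¹' Icc (θ + i * (2 * θ)) (2 * θ + i * (2 * θ))) {A B : Y} (hA : A ∈ K)
    (hB : B ∈ K) : l A = l B := by
  obtain ⟨i, hi⟩ := exists_subset_of_isConnected_of_subset_iUnion hl (by linarith)
    (fun _ ↦ subset_rfl) hK h₀
  obtain ⟨j, hj⟩ := exists_subset_of_isConnected_of_subset_iUnion hl (by linarith)
    (fun _ ↦ subset_rfl) hK h₁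
  rcases le_or_gt i j with hij | hij
  · have hend : (i : ℝ) * (2 * θ) ≤ j * (2 * θ) := by gcongr
    linarith [(hi hA).2, (hj hA).1, (hi hB).2, (hj hB).1]
  · have hend : ((j + 1 : ℤ) : ℝ) * (2 * θ) ≤ i * (2 * θ) := by gcongr; exact hij
    push_cast at hend
    linarith [(hi hA).1, (hj hA).2, (hi hB).1, (hj hB).2]

end Slabs

section UpperBound

variable {X : Type u} [TopologicalSpace X] [CompactSpace X] [T2Space X]
  {U : Set (Set (Subcontinua X))} {S : Finset C(X, ℝ)} {R : Set (Subcontinua X)}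

theorem Subcontinua.ComponentwiseOscLE.disjointlyCoverable {ε c : ℝ} (hU : ∀ u ∈ U, IsOpen u)
    (hS : ∀ A, ∃ u ∈ U, ∀ B, dist (profile S A) (profile S B) < ε → B ∈ u) (hc : c < ε)
    (hR : IsClosed R) (h : ComponentwiseOscLE S R c) : DisjointlyCoverable U R := by
  refine disjointlyCoverable_of_forall_isConnected hU hR fun K hKR hK hKc ↦ ?_
  obtain ⟨A, hA⟩ := hKc.nonempty
  obtain ⟨u, hu, hAu⟩ := hS A
  exact ⟨u, hu, fun B hB ↦ hAu B ((h K hKR hK hKc A hA B hB).trans_lt hc)⟩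

variable [ConnectedSpace X]

theorem IsCSpace.exists_level_periodic_slab_cover (hC : IsCSpace (Subcontinua X))
    (hhi : HereditarilyIndecomposable X) {Φ : Finset C(X, ℝ)} (hΦS : Φ ⊆ S) {θ δ : ℝ} (hθ : 0 < θ)
    (hδ : 0 < δ) : ∃ l : Subcontinua X → ℝ, Continuous l ∧ (∀ A, |l A - sumMax Φ A| ≤ θ / 8) ∧
      ∀ c d p : ℝ, 0 < p → d < c + p → ∃ P Q : Set (Subcontinua X), IsClosed P ∧ IsClosed Q ∧
        P ∪ Q = ⋃ i : ℤ, l ⁻¹' Icc (c + i * p) (d + i * p) ∧ ComponentwiseOscLE Φ P (d + θ - c) ∧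
        ComponentwiseOscLE Φ Q (d + θ - c) ∧ ∀ t, ComponentwiseOscLE S (P ∩ l ⁻¹' {t}) δ := by
  obtain ⟨l, hl, hlΦ, hcover⟩ := hC.exists_level_slab_cover hhi hΦS hθ hδ
  refine ⟨l, hl, hlΦ, fun c d p hp hdp ↦ ?_⟩
  choose P Q hP hQ hPQ hPosc hQosc hlevel using fun i : ℤ ↦ hcover (c + i * p) (d + i * p)
  have hPslab := fun i ↦ subset_union_left.trans (hPQ i).subset
  have hQslab := fun i ↦ subset_union_right.trans (hPQ i).subset
  have hwidth : ∀ i : ℤ, d + i * p + θ - (c + i * p) = d + θ - c := fun i ↦ by ring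
  simp only [hwidth] at hPosc hQosc
  refine ⟨⋃ i, P i, ⋃ i, Q i, isClosed_iUnion_of_subset_preimage_Icc hl hp hPslab hP,
    isClosed_iUnion_of_subset_preimage_Icc hl hp hQslab hQ, ?_, fun K hKP hK hKc ↦ ?_,
    fun K hKQ hK hKc ↦ ?_, fun t K hKP hK hKc ↦ ?_⟩
  · rw [← iUnion_union_distrib]
    exact iUnion_congr hPQ
  · obtain ⟨i, hi⟩ := exists_subset_of_isConnected_of_subset_iUnion hl hdp hPslab hKc hKP
    exact hPosc i K hi hK hKc
  · obtain ⟨i, hi⟩ := exists_subset_of_isConnected_of_subset_iUnion hl hdp hQslab hKc hKQ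
    exact hQosc i K hi hK hKc
  · obtain ⟨i, hi⟩ := exists_subset_of_isConnected_of_subset_iUnion hl hdp hPslab hKc
      (hKP.trans inter_subset_left)
    exact hlevel i t K (subset_inter hi (hKP.trans inter_subset_right)) hK hKc

theorem IsCSpace.exists_absorbing_slab_cover (hC : IsCSpace (Subcontinua X))
    (hhi : HereditarilyIndecomposable X) (hU : IsOpenCover U) {ε θ : ℝ}
    (hS : ∀ A, ∃ u ∈ U, ∀ B, dist (profile S A) (profile S B) < ε → B ∈ u) (hθ : 0 < θ)
    (hθε : 5 / 2 * θ < ε) : ∃ P Q : Set (Subcontinua X), IsClosed P ∧ IsClosed Q ∧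
      DisjointlyCoverable U Q ∧
      (∀ A, ∀ i : ℤ, sumMax S A ∈ Icc (-(θ / 8) + i * (2 * θ)) (9 / 8 * θ + i * (2 * θ)) →
        A ∈ P ∪ Q) ∧
      ∃ W : Set (Set (Subcontinua X)), IsOpenCover W ∧
        ∀ T, DisjointlyCoverable W T → DisjointlyCoverable U (P ∪ T) := by
  obtain ⟨l, -, hlS, hcover⟩ := hC.exists_level_periodic_slab_cover hhi subset_rfl hθ one_pos
  obtain ⟨P, Q, hP, hQ, hPQ, hPosc, hQosc, -⟩ := hcover (-(θ / 4)) (5 / 4 * θ) (2 * θ)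
    (by positivity) (by linarith)
  refine ⟨P, Q, hP, hQ, hQosc.disjointlyCoverable hU.1 hS (by linarith) hQ, fun A i hi ↦ ?_,
    DisjointlyCoverable.exists_isOpenCover_forall_union hU hP
      (hPosc.disjointlyCoverable hU.1 hS (by linarith) hP)⟩
  have hA := abs_le.1 (hlS A)
  exact hPQ ▸ mem_iUnion.2 ⟨i, by linarith [hi.1], by linarith [hi.2]⟩

/-- The slabs of `l` of odd index and width `θ` are covered by `P'` and `Q'`, those of even index by
`P` and `E ⊆ Q`. On a connected subset of `E ∩ P'` the function `l` is constant, being a multiple of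
`θ`, so `E ∩ P'` decomposes finely enough to be absorbed by `P`. -/
theorem IsCSpace.covDimLE_two (hC : IsCSpace (Subcontinua X)) (hhi : HereditarilyIndecomposable X) :
    CovDimLE (Subcontinua X) 2 := by
  classical
  intro U _ hU
  obtain ⟨Φ, ε, hε, hΦ⟩ := exists_profile_lebesgue_number hU
  obtain ⟨θ, hθ, hθε⟩ : ∃ θ > 0, 5 / 2 * θ < ε := ⟨ε / 5, by positivity, by linarith⟩
  obtain ⟨P, Q, hP, hQ, hQU, hPQ, W, hW, habsorb⟩ :=
    hC.exists_absorbing_slab_cover hhi hU hΦ hθ hθε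
  obtain ⟨Ψ, δ, hδ, hΨ⟩ := exists_profile_lebesgue_number hW
  obtain ⟨l, hl, hlΦ, hcover⟩ := hC.exists_level_periodic_slab_cover hhi
    (Finset.subset_union_left (s₁ := Φ) (s₂ := Ψ)) hθ (half_pos hδ)
  obtain ⟨P', Q', hP', hQ', hPQ', hPosc', hQosc', hlevel⟩ := hcover θ (2 * θ) (2 * θ)
    (by positivity) (by linarith)
  let E := Q ∩ ⋃ i : ℤ, l ⁻¹' Icc (0 + i * (2 * θ)) (θ + i * (2 * θ))
  have hE : IsClosed E := hQ.inter (isClosed_iUnion_of_subset_preimage_Icc hl (by positivity)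
    (fun _ ↦ subset_rfl) fun _ ↦ isClosed_Icc.preimage hl)
  have hEP' : ComponentwiseOscLE Ψ (E ∩ P') (δ / 2) := fun K hKR hK hKc A hA B hB ↦
    (dist_profile_mono Finset.subset_union_right A B).trans <| hlevel (l A) K
      (fun C hC ↦ ⟨(hKR hC).2, eq_of_mem_isConnected_of_subset_iUnion_Icc hθ hl hKc
        (fun C hC ↦ (hKR hC).1.2) (fun C hC ↦ hPQ'.subset (.inl (hKR hC).2)) hC hA⟩)
      hK hKc A hA B hB
  have hunion : P ∪ ⋃ i, ![E, P', Q'] i = univ := by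
    refine eq_univ_of_forall fun A ↦ ?_
    have hA := abs_le.1 (hlΦ A)
    rcases exists_mem_Icc_add_int_mul hθ (l A) with ⟨i, hi | hi⟩
    · exact (hPQ A i ⟨by linarith [hi.1], by linarith [hi.2]⟩).imp id
        fun hAQ ↦ mem_iUnion.2 ⟨0, hAQ, mem_iUnion.2 ⟨i, hi⟩⟩
    · exact .inr ((hPQ'.symm.subset (mem_iUnion.2 ⟨i, hi⟩)).elim (fun hA ↦ mem_iUnion.2 ⟨1, hA⟩)
        fun hA ↦ mem_iUnion.2 ⟨2, hA⟩)
  have hPU : DisjointlyCoverable U (P ∪ ⋂ i, ![E, P', Q'] i) := habsorb _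
    ((hEP'.disjointlyCoverable hW.1 hΨ (half_lt_self hδ) (hE.inter hP')).mono
      (subset_inter (iInter_subset _ 0) (iInter_subset _ 1)))
  simpa only [Nat.card_fin] using exists_refinement_ncard_le hP
    (Fin.forall_fin_succ.2 ⟨hE, Fin.forall_fin_two.2 ⟨hP', hQ'⟩⟩)
    (Fin.forall_fin_succ.2 ⟨hQU.mono inter_subset_left, Fin.forall_fin_two.2
      ⟨hPosc'.disjointlyCoverable hU.1 hΦ (by linarith) hP',
        hQosc'.disjointlyCoverable hU.1 hΦ (by linarith) hQ'⟩⟩) hunion hPU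

end UpperBound

section Triangle

open Complex

theorem im_lt_im_of_im_mul_exp {Y : Type*} [TopologicalSpace Y] [PreconnectedSpace Y] {L : Y → ℂ}
    (hL : Continuous L) {c : ℂ} (hc : ∀ y, 0 < (c * exp (L y)).re) {y y' : Y}
    (hy : (c * exp (L y)).im < 0) (hy' : 0 ≤ (c * exp (L y')).im) : (L y).im < (L y').im := by
  have hc₀ : c ≠ 0 := left_ne_zero_of_mul fun h ↦ (hc y).ne' (by rw [h, zero_re])
  have hexp : ∀ a, exp (L a - log (c * exp (L a))) = c⁻¹ := fun a ↦ by
    rw [exp_sub, exp_log (mul_ne_zero hc₀ (exp_ne_zero _)), div_mul_cancel_right₀ (exp_ne_zero _)]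
  have hconst := isCoveringMap_exp.const_of_comp
    (hL.sub ((continuous_const.mul hL.cexp).clog fun a ↦ .inl (hc a)))
    (fun a a' ↦ Subtype.ext ((hexp a).trans (hexp a').symm)) y y'
  have him : (L y).im - (c * exp (L y)).arg = (L y').im - (c * exp (L y')).arg := by
    simpa only [Pi.sub_apply, Pi.mul_apply, sub_im, log_im] using congrArg im hconst
  linarith [arg_neg_iff.2 hy, arg_nonneg_iff.2 hy']

theorem exists_continuous_exp_eq {X : Type*} [TopologicalSpace X] {w : unitInterval × X → ℂ}
    (hw : Continuous w) (hne : ∀ z, w z ≠ 0) (h₀ : ∀ x, w (0, x) ∈ slitPlane) :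
    ∃ L : unitInterval × X → ℂ, Continuous L ∧ (∀ z, exp (L z) = w z) ∧
      ∀ x, L (0, x) = log (w (0, x)) := by
  let H : C(unitInterval × X, {z : ℂ // z ≠ 0}) := ⟨fun z ↦ ⟨w z, hne z⟩, by fun_prop⟩
  let f : C(X, ℂ) := ⟨fun x ↦ log (w (0, x)), Continuous.clog (by fun_prop) h₀⟩
  have hf : ∀ x, H (0, x) = ⟨exp (f x), exp_ne_zero _⟩ := fun x ↦ Subtype.ext (exp_log (hne _)).symm
  exact ⟨isCoveringMap_exp.liftHomotopy H f hf, ContinuousMap.continuous _,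
    fun z ↦ congrArg Subtype.val (congrFun (isCoveringMap_exp.liftHomotopy_lifts H f hf) z),
    isCoveringMap_exp.liftHomotopy_zero H f hf⟩

/-- The combination, with weights `v`, of the vertices of a triangle around `0`. -/
noncomputable def weightedVertexSum (v : Fin 3 → ℝ) : ℂ := v 0 + v 1 * I + v 2 * (-1 - I)

/-- The multiplier turning the line through the `i`-th edge of the triangle with vertices `1`, `I`,
`-1 - I` into the line `re z = 1`. -/
noncomputable def edgeMultiplier : Fin 3 → ℂ := ![-2 - I, 1 + 2 * I, 1 - I]

theorem continuous_weightedVertexSum : Continuous weightedVertexSum := by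
  unfold weightedVertexSum
  fun_prop

theorem re_edgeMultiplier_mul_weightedVertexSum (v : Fin 3 → ℝ) (i : Fin 3) :
    (edgeMultiplier i * weightedVertexSum v).re = ∑ j, v j - 3 * v i := by
  fin_cases i <;> simp [edgeMultiplier, weightedVertexSum, Fin.sum_univ_three] <;> ring

theorem im_edgeMultiplier_mul_weightedVertexSum_neg {v : Fin 3 → ℝ} {i : Fin 3} (hi : v i = 0)
    (hi' : v (i + 2) = 0) (hv : 0 < ∑ j, v j) :
    (edgeMultiplier i * weightedVertexSum v).im < 0 := by
  fin_cases i <;>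
    simp [edgeMultiplier, weightedVertexSum, Fin.sum_univ_three] at hi hi' hv ⊢ <;> linarith

theorem im_edgeMultiplier_mul_weightedVertexSum_nonneg {v : Fin 3 → ℝ} {i : Fin 3} (hi : v i = 0)
    (hi' : v (i + 1) = 0) (hv : 0 < ∑ j, v j) :
    0 ≤ (edgeMultiplier i * weightedVertexSum v).im := by
  fin_cases i <;>
    simp [edgeMultiplier, weightedVertexSum, Fin.sum_univ_three] at hi hi' hv ⊢ <;> linarith

theorem im_lt_im_of_exp_eq_weightedVertexSum {Y : Type*} [TopologicalSpace Y] [PreconnectedSpace Y]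
    {L : Y → ℂ} (hL : Continuous L) {F : Y → Fin 3 → ℝ} (hsum : ∀ y, 0 < ∑ j, F y j)
    (hexp : ∀ y, exp (L y) = weightedVertexSum (F y)) {i : Fin 3} (hi : ∀ y, F y i = 0) {y y' : Y}
    (hy : F y (i + 2) = 0) (hy' : F y' (i + 1) = 0) : (L y).im < (L y').im := by
  refine im_lt_im_of_im_mul_exp (c := edgeMultiplier i) hL (fun a ↦ ?_) ?_ ?_
  · rw [hexp, re_edgeMultiplier_mul_weightedVertexSum, hi, mul_zero, sub_zero]
    exact hsum a
  · exact hexp y ▸ im_edgeMultiplier_mul_weightedVertexSum_neg (hi y) hy (hsum y)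
  · exact hexp y' ▸ im_edgeMultiplier_mul_weightedVertexSum_nonneg (hi y') hy' (hsum y')

/-- A theorem of Knaster–Kuratowski–Mazurkiewicz type. If it failed, `weightedVertexSum ∘ F` would
avoid `0` and have a logarithm, whose imaginary part would increase from `(1, p)` through
`{0} × X` and `(1, q)` back to `(1, p)`. -/
theorem exists_forall_pos_of_boundary {X : Type*} [TopologicalSpace X] [PreconnectedSpace X]
    {p q : X} {F : unitInterval × X → Fin 3 → ℝ} (hF : Continuous F) (hF₀ : ∀ z i, 0 ≤ F z i)
    (hpos : ∀ z, ∃ i, 0 < F z i) (h₀ : ∀ x, F (0, x) 0 = 0) (h₂ : ∀ x, F (0, x) 2 = 0)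
    (h₁ : ∀ x, F (1, x) 1 = 0) (hp : ∀ t, F (t, p) 2 = 0) (hq : ∀ t, F (t, q) 0 = 0) :
    ∃ z, ∀ i, 0 < F z i := by
  by_contra! hzero
  have hsum : ∀ z, 0 < ∑ j, F z j := fun z ↦
    Finset.sum_pos' (fun i _ ↦ hF₀ z i) ((hpos z).imp fun i hi ↦ ⟨Finset.mem_univ i, hi⟩)
  have hne : ∀ z, weightedVertexSum (F z) ≠ 0 := fun z h ↦ by
    obtain ⟨i, hi⟩ := hzero z
    have hre := re_edgeMultiplier_mul_weightedVertexSum (F z) i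
    rw [h, mul_zero, zero_re] at hre
    linarith [hsum z]
  have harg : ∀ x, (weightedVertexSum (F (0, x))).arg = Real.pi / 2 := fun x ↦ by
    have hx := hsum (0, x)
    rw [Fin.sum_univ_three, h₀, h₂] at hx
    rw [arg_eq_pi_div_two_iff]
    simpa [weightedVertexSum, h₀, h₂] using hx
  obtain ⟨L, hL, hexp, hL₀⟩ := exists_continuous_exp_eq (continuous_weightedVertexSum.comp hF) hne
    fun x ↦ mem_slitPlane_iff_arg.2 ⟨by rw [Function.comp, harg]; linarith [Real.pi_pos], hne _⟩
  have him₀ : ∀ x, (L (0, x)).im = Real.pi / 2 := fun x ↦ by rw [hL₀, log_im]; exact harg x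
  have hltp : (L (1, p)).im < (L (0, p)).im :=
    im_lt_im_of_exp_eq_weightedVertexSum (L := fun t ↦ L (t, p)) (by fun_prop) (fun _ ↦ hsum _)
      (fun _ ↦ hexp _) hp (h₁ p) (h₀ p)
  have hltq : (L (0, q)).im < (L (1, q)).im :=
    im_lt_im_of_exp_eq_weightedVertexSum (L := fun t ↦ L (t, q)) (by fun_prop) (fun _ ↦ hsum _)
      (fun _ ↦ hexp _) hq (h₂ q) (h₁ q)
  have hlt : (L (1, q)).im < (L (1, p)).im :=
    im_lt_im_of_exp_eq_weightedVertexSum (L := fun x ↦ L (1, x)) (by fun_prop) (fun _ ↦ hsum _)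
      (fun _ ↦ hexp _) h₁ (hq 1) (hp 1)
  linarith [him₀ p, him₀ q]

end Triangle

theorem CovDimLE.exists_isOpen_shrinking_iInter_eq_empty {Y : Type u} [TopologicalSpace Y] {n : ℕ}
    (h : CovDimLE Y n) {ι : Type*} [Finite ι] (hn : n + 1 < Nat.card ι) {U : ι → Set Y}
    (hU : ∀ i, IsOpen (U i)) (hUc : ⋃ i, U i = univ) : ∃ G : ι → Set Y, (∀ i, IsOpen (G i)) ∧
      (∀ i, G i ⊆ U i) ∧ ⋃ i, G i = univ ∧ ⋂ i, G i = ∅ := by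
  obtain ⟨V, hVfin, hV, hVU, hVn⟩ := h (range U) (finite_range U)
    ⟨forall_mem_range.2 hU, sUnion_range U ▸ hUc⟩
  simp only [Refines, exists_range_iff] at hVU
  have : Nonempty ι := Nat.card_pos_iff.1 (Nat.zero_lt_of_lt hn) |>.1
  choose! index hindex using hVU
  refine ⟨fun i ↦ ⋃₀ {v ∈ V | index v = i}, fun i ↦ isOpen_sUnion fun v hv ↦ hV.1 v hv.1,
    fun i ↦ sUnion_subset ?_, eq_univ_of_forall fun x ↦ ?_, ?_⟩
  · rintro v ⟨hv, rfl⟩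
    exact hindex v hv
  · obtain ⟨v, hv, hxv⟩ := hV.2.ge (mem_univ x)
    exact mem_iUnion.2 ⟨index v, v, ⟨hv, rfl⟩, hxv⟩
  · refine eq_empty_of_forall_notMem fun x hx ↦ ?_
    choose v hv hxv using mem_iInter.1 hx
    have hinj : Function.Injective v := fun i j hij ↦ (hv i).2.symm.trans (hij ▸ (hv j).2)
    have hcard : Nat.card ι ≤ {v ∈ V | x ∈ v}.ncard := by
      rw [← Set.ncard_range_of_injective hinj]
      exact ncard_le_ncard (range_subset_iff.2 fun i ↦ ⟨(hv i).1, hxv i⟩)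
        (hVfin.subset (sep_subset _ _))
    exact hn.not_ge (hcard.trans (hVn x))

section LowerBound

namespace Subcontinua

variable {X : Type u} [TopologicalSpace X] [CompactSpace X] [T2Space X]

theorem exists_open_cover_fin_three {p q : X} (hpq : p ≠ q) : ∃ U : Fin 3 → Set (Subcontinua X),
    (∀ i, IsOpen (U i)) ∧ ⋃ i, U i = univ ∧ (∀ A ∈ U 0, q ∉ A) ∧ (∀ x, {x} ∉ U 1) ∧
      ∀ A ∈ U 2, p ∉ A := by
  refine ⟨![{A | q ∉ A}, (range singleton)ᶜ, {A | p ∉ A}], ?_, ?_, fun A hA ↦ hA,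
    fun x hx ↦ hx ⟨x, rfl⟩, fun A hA ↦ hA⟩
  · exact Fin.forall_fin_succ.2 ⟨(isClosed_setOf_mem continuous_const continuous_id).isOpen_compl,
      Fin.forall_fin_two.2 ⟨(isCompact_range continuous_singleton).isClosed.isOpen_compl,
        (isClosed_setOf_mem continuous_const continuous_id).isOpen_compl⟩⟩
  · refine eq_univ_of_forall fun A ↦ ?_
    by_contra hA
    simp only [mem_iUnion, not_exists] at hA
    obtain ⟨x, rfl⟩ := not_not.1 (hA 1)
    exact hpq ((not_not.1 (hA 2)).trans (not_not.1 (hA 0)).symm)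

theorem exists_continuous_comp_profile {ι : Type*} {G : ι → Set (Subcontinua X)}
    (hG : ∀ i, IsOpen (G i)) (hGc : ⋃ i, G i = univ) (hGne : ∀ i, G i ≠ univ) :
    ∃ (S : Finset C(X, ℝ)) (g : (S → ℝ) → ι → ℝ), Continuous g ∧ (∀ v i, 0 ≤ g v i) ∧
      (∀ A, ∃ i, 0 < g (profile S A) i) ∧ ∀ A i, 0 < g (profile S A) i → A ∈ G i := by
  obtain ⟨S, ε, hε, hS⟩ := exists_profile_lebesgue_number (U := range G)
    ⟨forall_mem_range.2 hG, sUnion_range G ▸ hGc⟩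
  refine ⟨S, fun v i ↦ Metric.infDist v (profile S '' (G i)ᶜ),
    continuous_pi fun i ↦ Metric.continuous_infDist_pt _, fun v i ↦ Metric.infDist_nonneg,
    fun A ↦ ?_, fun A i hA ↦ ?_⟩
  · obtain ⟨_, ⟨i, rfl⟩, hi⟩ := hS A
    refine ⟨i, hε.trans_le ((Metric.le_infDist ((nonempty_compl.2 (hGne i)).image _)).2 ?_)⟩
    rintro _ ⟨B, hB, rfl⟩
    exact not_lt.1 (mt (hi B) hB)
  · by_contra hAG
    exact hA.ne' (Metric.infDist_zero_of_mem ⟨A, hAG, rfl⟩)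

variable [ConnectedSpace X]

/-- Growing the point `x` to `X` along the levels of `sumMax S` is a homotopy, up to subcontinua of
equal profile. -/
theorem exists_profile_homotopy (hhi : HereditarilyIndecomposable X) (S : Finset C(X, ℝ)) :
    ∃ b : unitInterval × X → Subcontinua X, Continuous (fun z ↦ profile S (b z)) ∧
      (∀ z, z.2 ∈ b z) ∧ (∀ x, profile S (b (0, x)) = profile S ⊤) ∧
      ∀ x, profile S (b (1, x)) = profile S {x} := by
  let r : unitInterval × X → ℝ := fun z ↦ (1 - z.1) * sumMax S ⊤ + z.1 * sumMax S {z.2}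
  have hr : Continuous r := by
    have hsum : Continuous fun z : unitInterval × X ↦ sumMax S {z.2} :=
      (continuous_sumMax S).comp (continuous_singleton.comp continuous_snd)
    fun_prop
  have hlevel : ∀ z, ∃ B, {z.2} ≤ B ∧ sumMax S B = r z := fun z ↦ by
    have hle := monotone_sumMax S (le_top : ({z.2} : Subcontinua X) ≤ ⊤)
    obtain ⟨ht₀, ht₁⟩ := z.1.2
    exact exists_le_eq_level hhi (continuous_sumMax S) (monotone_sumMax S)
      (by simp only [r]; nlinarith) (by simp only [r]; nlinarith)
  choose b hb hbr using hlevel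
  have hmem : ∀ z, z.2 ∈ b z := fun z ↦ singleton_le_iff.1 (hb z)
  refine ⟨b, continuous_profile_comp_of_level hhi (continuous_sumMax S) (controls_sumMax S)
    continuous_snd hr hmem hbr, hmem, fun x ↦ ?_, fun x ↦ ?_⟩
  · exact controls_sumMax S le_top (by simp [hbr, r])
  · exact (controls_sumMax S (hb (1, x)) (by simp [hbr, r])).symm

theorem not_covDimLE_one [Nontrivial X] (hhi : HereditarilyIndecomposable X) :
    ¬ CovDimLE (Subcontinua X) 1 := by
  intro h
  obtain ⟨p, q, hpq⟩ := exists_pair_ne X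
  obtain ⟨U, hU, hUc, hUq, hUs, hUp⟩ := exists_open_cover_fin_three hpq
  obtain ⟨G, hG, hGU, hGc, hGe⟩ := h.exists_isOpen_shrinking_iInter_eq_empty (by simp) hU hUc
  have hGne : ∀ i, G i ≠ univ := fun i hi ↦ by
    have hUi := univ_subset_iff.1 (hi ▸ hGU i)
    fin_cases i
    · exact hUq ⊤ (hUi.ge (mem_univ _)) (mem_top q)
    · exact hUs p (hUi.ge (mem_univ _))
    · exact hUp ⊤ (hUi.ge (mem_univ _)) (mem_top p)
  obtain ⟨S, g, hg, hg₀, hgpos, hgG⟩ := exists_continuous_comp_profile hG hGc hGne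
  obtain ⟨b, hb, hbmem, hb₀, hb₁⟩ := exists_profile_homotopy hhi S
  have hzero : ∀ A i, A ∉ U i → g (profile S A) i = 0 := fun A i hA ↦
    le_antisymm (not_lt.1 fun h ↦ hA (hGU i (hgG A i h))) (hg₀ _ _)
  obtain ⟨z, hz⟩ := exists_forall_pos_of_boundary (p := p) (q := q) (hg.comp hb)
    (fun _ ↦ hg₀ _) (fun _ ↦ hgpos _)
    (fun x ↦ (congrArg (g · 0) (hb₀ x)).trans (hzero ⊤ 0 fun h ↦ hUq ⊤ h (mem_top q)))
    (fun x ↦ (congrArg (g · 2) (hb₀ x)).trans (hzero ⊤ 2 fun h ↦ hUp ⊤ h (mem_top p)))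
    (fun x ↦ (congrArg (g · 1) (hb₁ x)).trans (hzero {x} 1 (hUs x)))
    (fun t ↦ hzero _ 2 fun h ↦ hUp _ h (hbmem (t, p)))
    (fun t ↦ hzero _ 0 fun h ↦ hUq _ h (hbmem (t, q)))
  exact hGe.le (mem_iInter.2 fun i ↦ hgG (b z) i (hz i))

end Subcontinua

end LowerBound

section CovDim

variable {Y : Type u} [TopologicalSpace Y] {n : ℕ}

theorem CovDimLE.mono {m : ℕ} (h : CovDimLE Y m) (hmn : m ≤ n) : CovDimLE Y n := fun U hU hUc ↦ by
  obtain ⟨V, hVfin, hV, hVU, hVm⟩ := h U hU hUc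
  exact ⟨V, hVfin, hV, hVU, fun x ↦ (hVm x).trans (Nat.succ_le_succ hmn)⟩

theorem covDim_le_iff : covDim Y ≤ n ↔ CovDimLE Y n := by
  refine ⟨fun h ↦ ?_, fun h ↦ sInf_le ⟨n, h, rfl⟩⟩
  obtain ⟨_, ⟨m, hm, rfl⟩, hmn⟩ := sInf_lt_iff.1 <| h.trans_lt <|
    ENat.natCast_lt_natCast.2 n.lt_succ_self
  exact hm.mono (Nat.lt_succ_iff.1 (ENat.natCast_lt_natCast.1 hmn))

theorem covDim_eq_zero [Subsingleton Y] : covDim Y = 0 := by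
  refine nonpos_iff_eq_zero.1 (covDim_le_iff (n := 0) |>.2 fun U hU hUc ↦ ?_)
  refine ⟨U ∩ {univ}, hU.inter_of_left _, ⟨fun u hu ↦ hUc.1 u hu.1, eq_univ_of_forall fun y ↦ ?_⟩,
    fun u hu ↦ ⟨u, hu.1, subset_rfl⟩, fun y ↦ ?_⟩
  · obtain ⟨u, hu, hy⟩ := hUc.2.ge (mem_univ y)
    exact ⟨u, ⟨hu, Subsingleton.eq_univ_of_nonempty ⟨y, hy⟩⟩, hy⟩
  · exact (ncard_le_ncard (fun u hu ↦ hu.1.2) (finite_singleton _)).trans (ncard_singleton _).le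

end CovDim

theorem hyperspace_dim_two_or_not_cSpace_general (X : Type u) [TopologicalSpace X] [CompactSpace X]
    [T2Space X] [ConnectedSpace X] [Nontrivial X] (hhi : HereditarilyIndecomposable X) :
    covDim (Subcontinua X) = 2 ∨ ¬ IsCSpace (Subcontinua X) := by
  refine or_iff_not_imp_right.2 fun hC ↦ le_antisymm ?_ ?_
  · exact covDim_le_iff.2 ((not_not.1 hC).covDimLE_two hhi)
  · exact Order.add_one_le_of_lt (not_le.1 (mt covDim_le_iff.1 (not_covDimLE_one hhi)))

/-- If `X` is a `1`-dimensional hereditarily indecomposable Hausdorff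
continuum, then either `C(X)` has covering dimension `2` or `C(X)` is not a C-space. -/
theorem hyperspace_dim_two_or_not_cSpace (X : Type u) [TopologicalSpace X]
    [CompactSpace X] [T2Space X] [ConnectedSpace X] (hdim : covDim X = 1)
    (hhi : HereditarilyIndecomposable X) :
    covDim (Subcontinua X) = 2 ∨ ¬ IsCSpace (Subcontinua X) := by
  have : Nontrivial X := not_subsingleton_iff_nontrivial.1 fun _ ↦
    zero_ne_one (covDim_eq_zero.symm.trans hdim)
  exact hyperspace_dim_two_or_not_cSpace_general X hhi
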